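/- arXiv:1108.3585 — 6 statements merged into one kernel-verified Lean document; each statement's English description precedes it below -/
import Mathlib

section
/- Let α₁, α₂, λ > 0 and let X₁ and X₂ be independent random variables with X₁ gamma-distributed with shape α₁ and scale λ and X₂ gamma-distributed with shape α₂ and scale λ. Then the random variable Z = S²/X̄² = (X₁ − X₂)²/(X₁ + X₂)² has density (with respect to Lebesgue measure on (0,1)) h(z; α₁, α₂) = (1/B(α₁,α₂)) · 2^{−(α₁+α₂)} · z^{−1/2} · [ (1 − √z)^{α₁−1}(1 + √z)^{α₂−1} + (1 + √z)^{α₁−1}(1 − √z)^{α₂−1} ], 0 < z < 1, where B denotes the Beta function. -/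
/-!
Let `T = (X₁ - X₂) / (X₁ + X₂)`, so that `Z = T ^ 2`. For fixed `X₁ = x`, the substitution
`y = x (1 - t) / (1 + t)` turns the joint density of `(X₁, X₂)` into that of `(X₁, T)`
(`lintegral_ratio_sub`). In `x` the latter is a multiple of a gamma density of shape `α₁ + α₂`, so
integrating `x` out (`lintegral_gamma_mul_gamma`) leaves the density
`2 ^ (1 - α₁ - α₂) / B(α₁, α₂) * (1 + t) ^ (α₁ - 1) * (1 - t) ^ (α₂ - 1)` of `T` on `(-1, 1)`.
The two branches `t = ±√z` of the square root (`lintegral_sq_sub`) give the two summands of the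
density of `Z`. All equalities are between integrals of an arbitrary measurable
`[0, ∞]`-valued test function `φ`, so no integrability has to be checked.
-/

open MeasureTheory ProbabilityTheory

section

open Set
open scoped ENNReal

/-- Mathlib's gamma density lives on `[0, ∞)`; dropping the null point `0` makes the substitutions
below available. -/
lemma gammaMeasure_eq_restrict (a r : ℝ) :
    gammaMeasure a r = (volume.restrict (Ioi 0)).withDensity (gammaPDF a r) := by
  rw [Measure.restrict_congr_set Ioi_ae_eq_Ici, ← withDensity_indicator measurableSet_Ici, gammaMeasure]
  congr 1
  ext x
  by_cases hx : 0 ≤ x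
  · simp [hx]
  · simp [hx, gammaPDF_of_neg (not_le.1 hx)]

/-- For fixed `x > 0`, the substitution `t = (x - y) / (x + y)`, that is
`y = x (1 - t) / (1 + t)`, maps `(-1, 1)` onto `(0, ∞)`. -/
lemma lintegral_ratio_sub (g : ℝ → ℝ≥0∞) {x : ℝ} (hx : 0 < x) :
    ∫⁻ y in Ioi 0, g y =
      ∫⁻ t in Ioo (-1) 1, ENNReal.ofReal (2 * x / (1 + t) ^ 2) * g (x * ((1 - t) / (1 + t))) := by
  have him : (fun t : ℝ => x * ((1 - t) / (1 + t))) '' Ioo (-1) 1 = Ioi 0 := by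
    ext y
    constructor
    · rintro ⟨t, ⟨h1, h2⟩, rfl⟩
      exact mul_pos hx (div_pos (by linarith) (by linarith))
    · intro hy
      have hy : 0 < y := hy
      have hxy : 0 < x + y := by positivity
      refine ⟨(x - y) / (x + y), ⟨?_, ?_⟩, ?_⟩
      · rw [lt_div_iff₀ hxy]; linarith
      · rw [div_lt_iff₀ hxy]; linarith
      · have : 1 + (x - y) / (x + y) = 2 * x / (x + y) := by field_simp; ring
        have h' : 1 - (x - y) / (x + y) = 2 * y / (x + y) := by field_simp; ring
        simp only [this, h']
        field_simp
  rw [← him, lintegral_image_eq_lintegral_abs_deriv_mul (f' := fun t => -(2 * x / (1 + t) ^ 2))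
    measurableSet_Ioo]
  · refine setLIntegral_congr_fun measurableSet_Ioo fun t _ => ?_
    simp only [abs_neg]
    rw [abs_of_nonneg (by positivity)]
  · rintro t ⟨h1, h2⟩
    have h0 : (1 + t) ≠ 0 := by linarith
    have := ((((hasDerivAt_id t).const_sub 1).div ((hasDerivAt_id t).const_add 1) h0).const_mul
      x).hasDerivWithinAt (s := Ioo (-1) 1)
    convert! this using 1
    simp only [id]
    field_simp
    ring
  · rintro t ⟨h1, h2⟩ u ⟨h3, h4⟩ h
    have h0 : (1 + t) ≠ 0 := by linarith
    have h0' : (1 + u) ≠ 0 := by linarith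
    have := mul_left_cancel₀ hx.ne' h
    rw [div_eq_div_iff h0 h0'] at this
    linarith

/-- The marginal density at `t` of `T = (X - Y) / (X + Y)`: as a function of `x`, the joint density
of `(X, T)` is a multiple of the gamma density of shape `a + b` and rate `2 r / (1 + t)`. -/
lemma lintegral_gamma_mul_gamma {a b r t : ℝ} (ha : 0 < a) (hb : 0 < b) (hr : 0 < r)
    (ht : t ∈ Ioo (-1 : ℝ) 1) :
    ∫⁻ x in Ioi 0, ENNReal.ofReal (2 * x / (1 + t) ^ 2) *
        (gammaPDF a r x * gammaPDF b r (x * ((1 - t) / (1 + t)))) =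
      ENNReal.ofReal (1 / (Real.Gamma a * Real.Gamma b / Real.Gamma (a + b)) *
        (2 * 2 ^ (-(a + b))) * ((1 + t) ^ (a - 1) * (1 - t) ^ (b - 1))) := by
  obtain ⟨h1, h2⟩ := ht
  have hp : 0 < 1 + t := by linarith
  have hm : 0 < 1 - t := by linarith
  have hone : ∫⁻ x in Ioi 0, gammaPDF (a + b) (2 * r / (1 + t)) x = 1 := by
    have := lintegral_gammaPDF_eq_one (add_pos ha hb) (by positivity : 0 < 2 * r / (1 + t))
    rw [← setLIntegral_univ, ← withDensity_apply _ .univ, ← gammaMeasure, gammaMeasure_eq_restrict,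
      withDensity_apply _ .univ, setLIntegral_univ] at this
    exact this
  rw [← mul_one (ENNReal.ofReal (1 / _ * _ * _)), ← hone,
    ← lintegral_const_mul' _ _ ENNReal.ofReal_ne_top]
  refine setLIntegral_congr_fun measurableSet_Ioi fun x (hx : 0 < x) => ?_
  have hGa := Real.Gamma_pos_of_pos ha
  have hGb := Real.Gamma_pos_of_pos hb
  have hGab := Real.Gamma_pos_of_pos (add_pos ha hb)
  have hc : 0 < x * ((1 - t) / (1 + t)) := by positivity
  simp only [gammaPDF_of_nonneg hx.le, gammaPDF_of_nonneg hc.le]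
  rw [← ENNReal.ofReal_mul (by positivity), ← ENNReal.ofReal_mul (by positivity),
    ← ENNReal.ofReal_mul (by positivity)]
  congr 1
  have hexp : Real.exp (-(2 * r / (1 + t) * x)) =
      Real.exp (-(r * x)) * Real.exp (-(r * (x * ((1 - t) / (1 + t))))) := by
    rw [← Real.exp_add]; congr 1; field_simp; ring
  rw [hexp, Real.mul_rpow hx.le (by positivity), Real.div_rpow hm.le hp.le,
    Real.div_rpow (by positivity) hp.le, Real.mul_rpow (by norm_num) hr.le,
    Real.rpow_neg (by norm_num), Real.rpow_add hr, Real.rpow_add hp,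
    Real.rpow_sub_one hx.ne', Real.rpow_sub_one hx.ne', Real.rpow_sub_one hx.ne',
    Real.rpow_add hx, Real.rpow_sub_one hp.ne', Real.rpow_sub_one hp.ne']
  field_simp

/-- If `T` has density `D` on `(-1, 1)`, then `T ^ 2` has density
`z ^ (-1/2) / 2 * (D (-√z) + D √z)` on `(0, 1)`. -/
lemma lintegral_sq_sub (D : ℝ → ℝ≥0∞) (φ : ℝ → ℝ≥0∞) (hD : Measurable D) (hφ : Measurable φ) :
    ∫⁻ t in Ioo (-1) 1, φ (t ^ 2) * D t =
      ∫⁻ z in Ioo 0 1, φ z * (ENNReal.ofReal (z ^ (-(1 / 2) : ℝ) / 2) *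
        (D (-√z) + D √z)) := by
  have hd : ∀ z ∈ Ioo (0:ℝ) 1, HasDerivWithinAt (fun z => √z) (z ^ (-(1 / 2) : ℝ) / 2)
      (Ioo 0 1) z := by
    intro z hz
    have := ((Real.hasDerivAt_sqrt hz.1.ne')).hasDerivWithinAt (s := Ioo 0 1)
    convert! this using 1
    rw [Real.rpow_neg hz.1.le, ← Real.sqrt_eq_rpow]
    field_simp
  have hinj : InjOn (fun z => √z) (Ioo (0:ℝ) 1) := fun z hz w hw h =>
    (Real.sqrt_inj hz.1.le hw.1.le).1 h
  have himp : (fun z => √z) '' Ioo (0:ℝ) 1 = Ioo 0 1 := by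
    ext t
    constructor
    · rintro ⟨z, hz, rfl⟩
      exact ⟨Real.sqrt_pos.2 hz.1, (Real.sqrt_lt' one_pos).2 (by simpa using hz.2)⟩
    · intro ht
      exact ⟨t ^ 2, ⟨by have := ht.1; positivity, by nlinarith [ht.1, ht.2]⟩,
        Real.sqrt_sq ht.1.le⟩
  have himn : (fun z => -√z) '' Ioo (0:ℝ) 1 = Ioo (-1) 0 := by
    rw [← image_image (fun t : ℝ => -t), himp]
    simp
  have hpos : ∀ z ∈ Ioo (0:ℝ) 1, |z ^ (-(1 / 2) : ℝ) / 2| = z ^ (-(1 / 2) : ℝ) / 2 :=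
    fun z hz => abs_of_nonneg (by have := hz.1; positivity)
  have hA : ∫⁻ t in Ioo 0 1, φ (t ^ 2) * D t =
      ∫⁻ z in Ioo 0 1, φ z * (ENNReal.ofReal (z ^ (-(1 / 2) : ℝ) / 2) * D √z) := by
    conv_lhs => rw [← himp]
    rw [lintegral_image_eq_lintegral_abs_deriv_mul measurableSet_Ioo hd hinj]
    refine setLIntegral_congr_fun measurableSet_Ioo fun z hz => ?_
    simp only [hpos z hz, Real.sq_sqrt hz.1.le]
    ring
  have hB : ∫⁻ t in Ioo (-1) 0, φ (t ^ 2) * D t =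
      ∫⁻ z in Ioo 0 1, φ z * (ENNReal.ofReal (z ^ (-(1 / 2) : ℝ) / 2) * D (-√z)) := by
    rw [← himn, lintegral_image_eq_lintegral_abs_deriv_mul measurableSet_Ioo
      (f := fun z => -√z) (fun z hz => (hd z hz).fun_neg) (fun z hz w hw h => hinj hz hw (neg_injective h))]
    refine setLIntegral_congr_fun measurableSet_Ioo fun z hz => ?_
    simp only [abs_neg, hpos z hz, neg_sq, Real.sq_sqrt hz.1.le]
    ring
  rw [← Ioo_union_Ico_eq_Ioo (show (-1:ℝ) < 0 by norm_num) zero_le_one,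
    lintegral_union measurableSet_Ico, Measure.restrict_congr_set (Ioo_ae_eq_Ico (a := (0:ℝ))).symm, hA, hB,
    ← lintegral_add_left (by fun_prop)]
  · refine lintegral_congr fun z => ?_
    ring
  · exact Set.disjoint_left.2 fun t h1 h2 => (h1.2.trans_le h2.1).false

end

/-- If `X₁ ~ Γ(α₁, λ)` and `X₂ ~ Γ(α₂, λ)` are independent, then
`Z = (X₁ - X₂)² / (X₁ + X₂)²` has density
`h(z) = (1/B(α₁,α₂)) 2^{-(α₁+α₂)} z^{-1/2} [(1-√z)^{α₁-1}(1+√z)^{α₂-1} +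
(1+√z)^{α₁-1}(1-√z)^{α₂-1}]` with respect to Lebesgue measure on `(0,1)`. -/
theorem density_of_S2_div_mean_sq
    {Ω : Type*} [MeasureSpace Ω] [IsProbabilityMeasure (ℙ : Measure Ω)]
    (α₁ α₂ lam : ℝ) (hα₁ : 0 < α₁) (hα₂ : 0 < α₂) (hlam : 0 < lam)
    (X₁ X₂ : Ω → ℝ) (hX₁m : Measurable X₁) (hX₂m : Measurable X₂)
    (hindep : IndepFun X₁ X₂ ℙ)
    (hX₁ : Measure.map X₁ ℙ = gammaMeasure α₁ (1 / lam))
    (hX₂ : Measure.map X₂ ℙ = gammaMeasure α₂ (1 / lam)) :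
    Measure.map (fun ω => (X₁ ω - X₂ ω) ^ 2 / (X₁ ω + X₂ ω) ^ 2) ℙ =
      ((volume : Measure ℝ).restrict (Set.Ioo 0 1)).withDensity (fun z =>
        ENNReal.ofReal
          ((1 / (Real.Gamma α₁ * Real.Gamma α₂ / Real.Gamma (α₁ + α₂))) *
            (2 : ℝ) ^ (-(α₁ + α₂)) * z ^ (-(1 / 2) : ℝ) *
            ((1 - Real.sqrt z) ^ (α₁ - 1) * (1 + Real.sqrt z) ^ (α₂ - 1) +
              (1 + Real.sqrt z) ^ (α₁ - 1) * (1 - Real.sqrt z) ^ (α₂ - 1)))) := by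
  have hr : 0 < 1 / lam := one_div_pos.2 hlam
  generalize 1 / lam = r at *
  refine Measure.ext_of_lintegral _ fun φ hφ => ?_
  have hmap : Measure.map (fun ω => (X₁ ω, X₂ ω)) ℙ =
      (gammaMeasure α₁ r).prod (gammaMeasure α₂ r) := by
    rw [← hX₁, ← hX₂]
    exact (indepFun_iff_map_prod_eq_prod_map_map hX₁m.aemeasurable hX₂m.aemeasurable).1 hindep
  have hg : ∀ a, Measurable (gammaPDF a r) := fun a => (measurable_gammaPDFReal a r).ennreal_ofReal
  have hg₁ := hg α₁
  have hg₂ := hg α₂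
  set K : ℝ := 1 / (Real.Gamma α₁ * Real.Gamma α₂ / Real.Gamma (α₁ + α₂)) with hK
  have hK0 : 0 < K := by
    have := Real.Gamma_pos_of_pos hα₁
    have := Real.Gamma_pos_of_pos hα₂
    have := Real.Gamma_pos_of_pos (add_pos hα₁ hα₂)
    positivity
  -- the density of `T = (X₁ - X₂) / (X₁ + X₂)` on `(-1, 1)`
  let D : ℝ → ENNReal := fun t =>
    ENNReal.ofReal (K * (2 * 2 ^ (-(α₁ + α₂))) * ((1 + t) ^ (α₁ - 1) * (1 - t) ^ (α₂ - 1)))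
  have hD : Measurable D := by fun_prop
  calc ∫⁻ z, φ z ∂(Measure.map (fun ω => (X₁ ω - X₂ ω) ^ 2 / (X₁ ω + X₂ ω) ^ 2) ℙ)
      = ∫⁻ p, φ ((p.1 - p.2) ^ 2 / (p.1 + p.2) ^ 2)
          ∂((gammaMeasure α₁ r).prod (gammaMeasure α₂ r)) := by
        rw [← hmap, lintegral_map (by fun_prop) (by fun_prop),
          lintegral_map (by fun_prop) (by fun_prop)]
    _ = ∫⁻ x in Set.Ioi 0, ∫⁻ y in Set.Ioi 0, gammaPDF α₁ r x *
          (gammaPDF α₂ r y * φ ((x - y) ^ 2 / (x + y) ^ 2)) := by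
        rw [gammaMeasure_eq_restrict, gammaMeasure_eq_restrict,
          lintegral_prod _ (Measurable.aemeasurable (by fun_prop)),
          lintegral_withDensity_eq_lintegral_mul _ hg₁ (Measurable.lintegral_prod_right (by fun_prop))]
        refine lintegral_congr fun x => ?_
        rw [Pi.mul_apply, lintegral_withDensity_eq_lintegral_mul _ hg₂ (by fun_prop),
          ← lintegral_const_mul _ (by fun_prop)]
        rfl
    _ = ∫⁻ x in Set.Ioi 0, ∫⁻ t in Set.Ioo (-1) 1, φ (t ^ 2) *
          (ENNReal.ofReal (2 * x / (1 + t) ^ 2) *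
            (gammaPDF α₁ r x * gammaPDF α₂ r (x * ((1 - t) / (1 + t))))) := by
        refine setLIntegral_congr_fun measurableSet_Ioi fun x (hx : 0 < x) => ?_
        rw [lintegral_ratio_sub _ hx]
        refine setLIntegral_congr_fun measurableSet_Ioo fun t ht => ?_
        have hp : 0 < 1 + t := by linarith [ht.1]
        have hT : (x - x * ((1 - t) / (1 + t))) ^ 2 / (x + x * ((1 - t) / (1 + t))) ^ 2 =
            t ^ 2 := by
          have e₁ : x - x * ((1 - t) / (1 + t)) = t * (2 * x / (1 + t)) := by field_simp; ring
          have e₂ : x + x * ((1 - t) / (1 + t)) = 2 * x / (1 + t) := by field_simp; ring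
          rw [e₁, e₂]
          field_simp
        simp only [hT]
        ring
    _ = ∫⁻ t in Set.Ioo (-1) 1, φ (t ^ 2) * D t := by
        rw [lintegral_lintegral_swap (Measurable.aemeasurable (by fun_prop))]
        refine setLIntegral_congr_fun measurableSet_Ioo fun t ht => ?_
        rw [lintegral_const_mul _ (by fun_prop), lintegral_gamma_mul_gamma hα₁ hα₂ hr ht]
    _ = _ := by
        rw [lintegral_sq_sub D φ hD hφ,
          lintegral_withDensity_eq_lintegral_mul _ (by fun_prop) hφ]
        refine setLIntegral_congr_fun measurableSet_Ioo fun z hz => ?_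
        have hz0 := hz.1
        have hs : √z < 1 := (Real.sqrt_lt' one_pos).2 (by simpa using hz.2)
        have hm : 0 < 1 - √z := by linarith
        simp only [Pi.mul_apply, D]
        rw [← ENNReal.ofReal_add (by simp only [← sub_eq_add_neg, sub_neg_eq_add]; positivity)
          (by positivity), ← ENNReal.ofReal_mul (by positivity), mul_comm]
        congr 2
        simp only [← sub_eq_add_neg, sub_neg_eq_add]
        ring
end

section
/- Let α, λ > 0 and let X₁ and X₂ be i.i.d. random variables with the gamma distribution with shape α and scale λ. Then the random variable 1/α̂ = S²/X̄² = (X₁ − X₂)²/(X₁ + X₂)² has the Beta distribution with parameters 1/2 and α, i.e., its density on (0,1) is z^{−1/2}(1 − z)^{α−1}/B(1/2, α). -/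
/-!
Writing the expectation of `g ((X₁ - X₂)² / (X₁ + X₂)²)`, for measurable `g ≥ 0`, as an iterated
integral against the two gamma densities, the substitution `y = x (1 - u) / (1 + u)` for fixed
`x > 0` turns the ratio `(x - y) / (x + y)` into `u ∈ (-1, 1)` (`lintegral_Ioi_mobius`). After
exchanging the integrals, the integral over `x` is again a gamma integral; Legendre's duplication
formula identifies the result as `(1 - u²) ^ (α - 1) / B(1/2, α)`, so that this is the density of
`(X₁ - X₂) / (X₁ + X₂)` (`lintegral_joint`). Finally `z = u²`, which covers `(0, 1)` twice,
contributes the factor `z ^ (-1/2)` (`lintegral_Ioo_sq`).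
-/

open MeasureTheory ProbabilityTheory
open Set

lemma lintegral_gammaMeasure (a r : ℝ) (f : ℝ → ENNReal) (hf : Measurable f) :
    ∫⁻ x, f x ∂(gammaMeasure a r) = ∫⁻ x in Ioi (0 : ℝ),
      ENNReal.ofReal (r ^ a / Real.Gamma a * x ^ (a - 1) * Real.exp (-(r * x))) * f x := by
  have hm : Measurable (gammaPDF a r) := (measurable_gammaPDFReal a r).ennreal_ofReal
  rw [gammaMeasure, lintegral_withDensity_eq_lintegral_mul _ hm hf,
    ← setLIntegral_congr (Ioi_ae_eq_Ici (a := (0 : ℝ)) (μ := volume)).symm,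
    ← lintegral_indicator measurableSet_Ici]
  refine lintegral_congr fun x => ?_
  by_cases hx : 0 ≤ x
  · simp [hx, gammaPDF_of_nonneg]
  · simp [hx, gammaPDF_of_neg (not_le.mp hx)]

lemma lintegral_rpow_mul_exp {a r : ℝ} (ha : 0 < a) (hr : 0 < r) :
    ∫⁻ x in Ioi (0 : ℝ), ENNReal.ofReal (x ^ (a - 1) * Real.exp (-(r * x))) =
      ENNReal.ofReal ((1 / r) ^ a * Real.Gamma a) := by
  rw [← Real.integral_rpow_mul_exp_neg_mul_Ioi ha hr, ofReal_integral_eq_lintegral_ofReal]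
  · refine Integrable.of_integral_ne_zero ?_
    rw [Real.integral_rpow_mul_exp_neg_mul_Ioi ha hr]
    have := Real.Gamma_pos_of_pos ha
    positivity
  · refine ae_restrict_of_forall_mem measurableSet_Ioi fun x (hx : 0 < x) => ?_
    positivity

/-- The substitution `y = x (1 - u) / (1 + u)`, whose inverse is `u = (x - y) / (x + y)`. -/
lemma lintegral_Ioi_mobius {x : ℝ} (hx : 0 < x) (f : ℝ → ENNReal) :
    ∫⁻ y in Ioi (0 : ℝ), f y = ∫⁻ u in Ioo (-1 : ℝ) 1,
      ENNReal.ofReal (2 * x / (1 + u) ^ 2) * f (x * (1 - u) / (1 + u)) := by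
  have himg : (fun u : ℝ => x * (1 - u) / (1 + u)) '' Ioo (-1) 1 = Ioi 0 := by
    ext y
    constructor
    · rintro ⟨u, ⟨h1, h2⟩, rfl⟩
      exact div_pos (mul_pos hx (by linarith)) (by linarith)
    · intro hy
      have hy : 0 < y := hy
      refine ⟨(x - y) / (x + y), ⟨?_, ?_⟩, ?_⟩
      · rw [lt_div_iff₀ (by positivity)]; linarith
      · rw [div_lt_iff₀ (by positivity)]; linarith
      · have : x + y ≠ 0 := by positivity
        have h2 : 1 + (x - y) / (x + y) = 2 * x / (x + y) := by field_simp; ring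
        have h3 : 1 - (x - y) / (x + y) = 2 * y / (x + y) := by field_simp; ring
        simp only [h2, h3]
        field_simp
  have hinj : InjOn (fun u : ℝ => x * (1 - u) / (1 + u)) (Ioo (-1) 1) := by
    rintro u ⟨hu, -⟩ v ⟨hv, -⟩ h
    have hu : 1 + u ≠ 0 := by linarith
    have hv : 1 + v ≠ 0 := by linarith
    simp only at h
    rw [div_eq_div_iff hu hv] at h
    have : x * (u - v) = 0 := by linarith
    rcases mul_eq_zero.mp this with h | h <;> linarith
  have hder : ∀ u ∈ Ioo (-1 : ℝ) 1, HasDerivWithinAt (fun u : ℝ => x * (1 - u) / (1 + u))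
      (-(2 * x / (1 + u) ^ 2)) (Ioo (-1) 1) u := by
    rintro u ⟨hu, -⟩
    have hu : 1 + u ≠ 0 := by linarith
    have h := ((((hasDerivAt_id u).const_sub 1).const_mul x).div
      ((hasDerivAt_id u).const_add 1) hu).hasDerivWithinAt (s := Ioo (-1) 1)
    refine h.congr_deriv ?_
    simp only [id]
    field_simp
    ring
  rw [← himg, lintegral_image_eq_lintegral_abs_deriv_mul measurableSet_Ioo hder hinj]
  refine setLIntegral_congr_fun measurableSet_Ioo fun u _ => ?_
  rw [abs_neg, abs_of_nonneg (by positivity)]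

/-- The substitution `z = u²` on `(-1, 1)`: the Jacobian `2 |u|` of each of the two branches cancels
`z ^ (-1/2) = |u|⁻¹` up to the factor `2`, which accounts for the two branches. -/
lemma lintegral_Ioo_sq (G : ℝ → ENNReal) :
    ∫⁻ z in Ioo (0 : ℝ) 1, ENNReal.ofReal (z ^ (-(1 / 2) : ℝ)) * G z =
      ∫⁻ u in Ioo (-1 : ℝ) 1, G (u ^ 2) := by
  -- each half of `(-1, 1)` is mapped bijectively onto `(0, 1)` by squaring
  have key : ∀ s : Set ℝ, MeasurableSet s → (fun u : ℝ => u ^ 2) '' s = Ioo 0 1 →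
      InjOn (fun u : ℝ => u ^ 2) s → 0 ∉ s →
      ∫⁻ z in Ioo (0 : ℝ) 1, ENNReal.ofReal (z ^ (-(1 / 2) : ℝ)) * G z =
        2 * ∫⁻ u in s, G (u ^ 2) := by
    intro s hs himg hinj h0
    rw [← himg, lintegral_image_eq_lintegral_abs_deriv_mul hs (f' := fun u => 2 * u)
      (fun u _ => by simpa using (hasDerivAt_pow 2 u).hasDerivWithinAt) hinj,
      ← lintegral_const_mul' _ _ (by simp)]
    refine setLIntegral_congr_fun hs fun u hu => ?_
    have hu0 : 0 < |u| := abs_pos.mpr fun h => h0 (h ▸ hu)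
    have : (u ^ 2) ^ (-(1 / 2) : ℝ) = |u|⁻¹ := by
      rw [← sq_abs, Real.rpow_neg (by positivity), ← Real.sqrt_eq_rpow, Real.sqrt_sq hu0.le]
    rw [this, ← mul_assoc, ← ENNReal.ofReal_mul (by positivity), abs_mul, mul_assoc,
      mul_inv_cancel₀ hu0.ne']
    norm_num
  have hpos := key (Ioo 0 1) measurableSet_Ioo (by
      ext z
      constructor
      · rintro ⟨u, ⟨h1, h2⟩, rfl⟩
        exact ⟨by positivity, by simp only; nlinarith⟩
      · rintro ⟨h1, h2⟩
        exact ⟨√z, ⟨Real.sqrt_pos.mpr h1, by rw [Real.sqrt_lt' one_pos]; simpa using h2⟩,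
          Real.sq_sqrt h1.le⟩) (by
      rintro u ⟨hu, -⟩ v ⟨hv, -⟩ h
      simp only at h
      nlinarith) (by simp)
  have hneg := key (Ioo (-1) 0) measurableSet_Ioo (by
      ext z
      constructor
      · rintro ⟨u, ⟨h1, h2⟩, rfl⟩
        exact ⟨by simp only; nlinarith, by simp only; nlinarith⟩
      · rintro ⟨h1, h2⟩
        have h3 : √z < 1 := by rw [Real.sqrt_lt' one_pos]; simpa using h2
        have h4 := Real.sqrt_pos.mpr h1
        exact ⟨-√z, ⟨by linarith, by linarith⟩, by simp [Real.sq_sqrt h1.le]⟩) (by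
      rintro u ⟨-, hu⟩ v ⟨-, hv⟩ h
      simp only at h
      nlinarith) (by simp)
  have hsplit : ∫⁻ u in Ioo (-1 : ℝ) 1, G (u ^ 2) =
      (∫⁻ u in Ioo (-1 : ℝ) 0, G (u ^ 2)) + ∫⁻ u in Ioo (0 : ℝ) 1, G (u ^ 2) := by
    rw [← Ioc_union_Ioo_eq_Ioo (a := (-1 : ℝ)) (b := 0) (c := 1) (by norm_num) (by norm_num),
      lintegral_union measurableSet_Ioo
        (Set.disjoint_left.mpr fun u h1 h2 => absurd h1.2 (not_le.mpr h2.1)),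
      setLIntegral_congr (Ioo_ae_eq_Ioc (μ := volume)).symm]
  have heq : ∫⁻ u in Ioo (-1 : ℝ) 0, G (u ^ 2) = ∫⁻ u in Ioo (0 : ℝ) 1, G (u ^ 2) := by
    have := hneg.symm.trans hpos
    rwa [ENNReal.mul_right_inj (by simp) (by simp)] at this
  rw [hsplit, heq, ← two_mul, ← hpos]

/-- Integrating out `x` from the joint density of `X₁` and `U = (X₁ - X₂) / (X₁ + X₂)` in the
coordinates `(x, u)` gives the density of `U`. -/
lemma lintegral_joint {α r u : ℝ} (hα : 0 < α) (hr : 0 < r) (hu : u ∈ Ioo (-1 : ℝ) 1) :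
    ∫⁻ x in Ioi (0 : ℝ),
      ENNReal.ofReal (r ^ α / Real.Gamma α * x ^ (α - 1) * Real.exp (-(r * x))) *
        (ENNReal.ofReal (2 * x / (1 + u) ^ 2) *
          ENNReal.ofReal (r ^ α / Real.Gamma α * (x * (1 - u) / (1 + u)) ^ (α - 1) *
            Real.exp (-(r * (x * (1 - u) / (1 + u)))))) =
      ENNReal.ofReal ((1 - u ^ 2) ^ (α - 1) /
        (Real.Gamma (1 / 2) * Real.Gamma α / Real.Gamma (1 / 2 + α))) := by
  obtain ⟨h1, h2⟩ := hu
  have h1 : 0 < 1 + u := by linarith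
  have h2 : 0 < 1 - u := by linarith
  have hG := Real.Gamma_pos_of_pos hα
  have hG2 : 0 < Real.Gamma (2 * α) := Real.Gamma_pos_of_pos (by positivity)
  have hG3 : 0 < Real.Gamma (α + 1 / 2) := Real.Gamma_pos_of_pos (by positivity)
  set C : ℝ := (r ^ α / Real.Gamma α) ^ 2 * (2 / (1 + u) ^ 2) * ((1 - u) / (1 + u)) ^ (α - 1)
    with hC
  have hC0 : 0 ≤ C := by positivity
  have step : ∀ x ∈ Ioi (0 : ℝ),
      ENNReal.ofReal (r ^ α / Real.Gamma α * x ^ (α - 1) * Real.exp (-(r * x))) *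
        (ENNReal.ofReal (2 * x / (1 + u) ^ 2) *
          ENNReal.ofReal (r ^ α / Real.Gamma α * (x * (1 - u) / (1 + u)) ^ (α - 1) *
            Real.exp (-(r * (x * (1 - u) / (1 + u)))))) =
      ENNReal.ofReal C * ENNReal.ofReal
        (x ^ (2 * α - 1) * Real.exp (-(2 * r / (1 + u) * x))) := by
    intro x hx
    have hx : 0 < x := hx
    rw [← ENNReal.ofReal_mul (by positivity), ← ENNReal.ofReal_mul (by positivity),
      ← ENNReal.ofReal_mul hC0]
    congr 1
    have e1 : Real.exp (-(2 * r / (1 + u) * x)) =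
        Real.exp (-(r * x)) * Real.exp (-(r * (x * (1 - u) / (1 + u)))) := by
      rw [← Real.exp_add]
      congr 1
      field_simp
      ring
    have e2 : x ^ (2 * α - 1) = x ^ (α - 1) * x ^ (α - 1) * x := by
      rw [← Real.rpow_add hx, ← Real.rpow_add_one hx.ne']
      congr 1
      ring
    have e3 : (x * (1 - u) / (1 + u)) ^ (α - 1) =
        x ^ (α - 1) * ((1 - u) / (1 + u)) ^ (α - 1) := by
      rw [mul_div_assoc, Real.mul_rpow hx.le (by positivity)]
    rw [e1, e2, e3, hC]
    ring
  rw [setLIntegral_congr_fun measurableSet_Ioi step, lintegral_const_mul' _ _ (by simp),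
    lintegral_rpow_mul_exp (by positivity) (by positivity), ← ENNReal.ofReal_mul hC0]
  congr 1
  -- The powers of `r` cancel, and the duplication formula converts `Γ(2α) / Γ(α)²`.
  have dup := Real.Gamma_mul_Gamma_add_half α
  have p1 : (1 - u ^ 2) ^ (α - 1) = (1 - u) ^ (α - 1) * (1 + u) ^ (α - 1) := by
    rw [← Real.mul_rpow h2.le h1.le]
    congr 1
    ring
  have p2 : ((1 - u) / (1 + u)) ^ (α - 1) = (1 - u) ^ (α - 1) / (1 + u) ^ (α - 1) :=
    Real.div_rpow h2.le h1.le _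
  have p3 : (1 / (2 * r / (1 + u))) ^ (2 * α) =
      (1 + u) ^ 2 * ((1 + u) ^ (α - 1)) ^ 2 / (2 ^ (2 * α) * (r ^ α) ^ 2) := by
    rw [one_div_div, Real.div_rpow h1.le (by positivity), Real.mul_rpow (by norm_num) hr.le]
    congr 1
    · rw [← Real.rpow_natCast, ← Real.rpow_natCast, ← Real.rpow_mul h1.le,
        ← Real.rpow_add h1]
      congr 1
      push_cast
      ring
    · rw [← Real.rpow_natCast (r ^ α), ← Real.rpow_mul hr.le]
      congr 2
      push_cast
      ring
  have p4 : (2 : ℝ) ^ (1 - 2 * α) = 2 / 2 ^ (2 * α) := by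
    rw [Real.rpow_sub two_pos, Real.rpow_one]
  rw [p4] at dup
  have hpi : 0 < √Real.pi := Real.sqrt_pos.mpr Real.pi_pos
  have hr' : 0 < r ^ α := by positivity
  have hq : 0 < (1 + u) ^ (α - 1) := by positivity
  have h2' : (0 : ℝ) < 2 ^ (2 * α) := by positivity
  rw [hC, p1, p2, p3, Real.Gamma_one_half_eq, add_comm (1 / 2 : ℝ) α]
  generalize (1 + u) ^ (α - 1) = A at *
  generalize (1 - u) ^ (α - 1) = B at *
  generalize r ^ α = R at *
  generalize (2 : ℝ) ^ (2 * α) = T at *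
  field_simp at dup ⊢
  linear_combination (-B) * dup

/-- If `X₁, X₂` are i.i.d. `Γ(α, λ)`, then for `n = 2` the statistic
`1/α̂ = S²/X̄² = (X₁ - X₂)²/(X₁ + X₂)²` has the Beta distribution with parameters
`1/2` and `α`, i.e. density `z^{-1/2}(1-z)^{α-1}/B(1/2, α)` on `(0,1)`. -/
theorem inv_momentEstimator_beta_distributed
    {Ω : Type*} [MeasureSpace Ω] [IsProbabilityMeasure (ℙ : Measure Ω)]
    (α lam : ℝ) (hα : 0 < α) (hlam : 0 < lam)
    (X₁ X₂ : Ω → ℝ) (hX₁m : Measurable X₁) (hX₂m : Measurable X₂)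
    (hindep : IndepFun X₁ X₂ ℙ)
    (hX₁ : Measure.map X₁ ℙ = gammaMeasure α (1 / lam))
    (hX₂ : Measure.map X₂ ℙ = gammaMeasure α (1 / lam)) :
    Measure.map (fun ω => (X₁ ω - X₂ ω) ^ 2 / (X₁ ω + X₂ ω) ^ 2) ℙ =
      ((volume : Measure ℝ).restrict (Set.Ioo 0 1)).withDensity (fun z =>
        ENNReal.ofReal
          (z ^ (-(1 / 2) : ℝ) * (1 - z) ^ (α - 1) /
            (Real.Gamma (1 / 2) * Real.Gamma α / Real.Gamma (1 / 2 + α)))) := by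
  have hr : 0 < 1 / lam := by positivity
  generalize 1 / lam = r at *
  have : IsProbabilityMeasure (gammaMeasure α r) := isProbabilityMeasure_gammaMeasure hα hr
  have hjoint : Measure.map (fun ω => (X₁ ω, X₂ ω)) ℙ =
      (gammaMeasure α r).prod (gammaMeasure α r) := by
    rw [(indepFun_iff_map_prod_eq_prod_map_map hX₁m.aemeasurable hX₂m.aemeasurable).mp hindep,
      hX₁, hX₂]
  refine Measure.ext_of_lintegral _ fun g hg => ?_
  have hT : Measurable fun p : ℝ × ℝ => (p.1 - p.2) ^ 2 / (p.1 + p.2) ^ 2 := by fun_prop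
  have hgT : Measurable fun p : ℝ × ℝ => g ((p.1 - p.2) ^ 2 / (p.1 + p.2) ^ 2) := hg.comp hT
  rw [lintegral_map hg (show Measurable fun ω => (X₁ ω - X₂ ω) ^ 2 / (X₁ ω + X₂ ω) ^ 2 by fun_prop),
    lintegral_withDensity_eq_lintegral_mul _ (by fun_prop) hg]
  have hpush := lintegral_map (μ := (ℙ : Measure Ω)) hgT (hX₁m.prodMk hX₂m)
  rw [hjoint, lintegral_prod _ hgT.aemeasurable] at hpush
  refine hpush.symm.trans ?_
  rw [lintegral_gammaMeasure _ _ _ hgT.lintegral_prod_right']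
  set p : ℝ → ENNReal := fun x =>
    ENNReal.ofReal (r ^ α / Real.Gamma α * x ^ (α - 1) * Real.exp (-(r * x))) with hp
  have hpm : Measurable p := by fun_prop
  calc
    _ = ∫⁻ x in Ioi (0 : ℝ), ∫⁻ u in Ioo (-1 : ℝ) 1,
          g (u ^ 2) * (p x * (ENNReal.ofReal (2 * x / (1 + u) ^ 2) *
            p (x * (1 - u) / (1 + u)))) := by
        refine setLIntegral_congr_fun measurableSet_Ioi fun x (hx : 0 < x) => ?_
        simp only
        rw [lintegral_gammaMeasure _ _ _
            (show Measurable fun y => g ((x - y) ^ 2 / (x + y) ^ 2) by fun_prop),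
          lintegral_Ioi_mobius hx, ← lintegral_const_mul' _ _ (by simp)]
        refine setLIntegral_congr_fun measurableSet_Ioo fun u hu => ?_
        have h1 : 1 + u ≠ 0 := by linarith [hu.1]
        have e1 : x + x * (1 - u) / (1 + u) = 2 * x / (1 + u) := by field_simp; ring
        have e2 : x - x * (1 - u) / (1 + u) = 2 * x / (1 + u) * u := by field_simp; ring
        have e : (x - x * (1 - u) / (1 + u)) ^ 2 / (x + x * (1 - u) / (1 + u)) ^ 2 = u ^ 2 := by
          rw [e1, e2]
          field_simp
        simp only [hp, e]
        ring
    _ = ∫⁻ u in Ioo (-1 : ℝ) 1, ∫⁻ x in Ioi (0 : ℝ),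
          g (u ^ 2) * (p x * (ENNReal.ofReal (2 * x / (1 + u) ^ 2) *
            p (x * (1 - u) / (1 + u)))) :=
        lintegral_lintegral_swap (by
          simp only [Function.uncurry_def]
          fun_prop)
    _ = ∫⁻ u in Ioo (-1 : ℝ) 1, g (u ^ 2) * ENNReal.ofReal ((1 - u ^ 2) ^ (α - 1) /
        (Real.Gamma (1 / 2) * Real.Gamma α / Real.Gamma (1 / 2 + α))) := by
        refine setLIntegral_congr_fun measurableSet_Ioo fun u hu => ?_
        rw [lintegral_const_mul _ (by fun_prop), lintegral_joint hα hr hu]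
    _ = _ := by
        rw [← lintegral_Ioo_sq fun z => g z * ENNReal.ofReal ((1 - z) ^ (α - 1) /
          (Real.Gamma (1 / 2) * Real.Gamma α / Real.Gamma (1 / 2 + α)))]
        refine setLIntegral_congr_fun measurableSet_Ioo fun z hz => ?_
        have hz0 := hz.1
        simp only [Pi.mul_apply]
        rw [mul_div_assoc (z ^ (-(1 / 2) : ℝ)), ENNReal.ofReal_mul (by positivity)]
        ring
end

section
/- For sample size n = 2, the statistic 1/α̂ is not dispersively monotone in the shape parameter: for any α₁, α₂ > 0 with α₁ ≠ α₂, it is not the case that the Beta(1/2, α₁) distribution is dispersively smaller than the Beta(1/2, α₂) distribution. (Here 1/α̂ for a sample of size 2 from a gamma distribution with shape α has the Beta(1/2, α) distribution, which is supported on the bounded interval (0,1).) -/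
/-!
Both distributions have support exactly `[0, 1]`. If `Q₁`, `Q₂` are the quantile functions, then
the dispersive order says that `Q₂ - Q₁` is nondecreasing on `(0, 1)`. But `Q₁` and `Q₂` both tend
to `0` at `0` and to `1` at `1`, so `Q₂ - Q₁` tends to `0` at both ends and must vanish identically
(`quantile_eq_of_disp`). Since each CDF is a continuous increasing bijection of `[0, 1]` inverted by
its quantile function, the two CDFs agree on `(0, 1)`, hence so do their derivatives, the densities.
Taking logarithms of the densities at `1/2` and `3/4` then forces `α₁ = α₂`.
-/

open MeasureTheory

/-- The density of the Beta distribution with parameters `1/2` and `α`, as a function on `ℝ`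
(vanishing outside `(0,1)`). -/
noncomputable def betaHalfPDF (α : ℝ) : ℝ → ℝ :=
  Set.indicator (Set.Ioo 0 1) (fun z =>
    z ^ (-(1 / 2) : ℝ) * (1 - z) ^ (α - 1) /
      (Real.Gamma (1 / 2) * Real.Gamma α / Real.Gamma (1 / 2 + α)))

/-- The cumulative distribution function of the Beta distribution `B(1/2, α)`. -/
noncomputable def betaHalfCDF (α : ℝ) (x : ℝ) : ℝ :=
  ∫ t in Set.Iic x, betaHalfPDF α t

/-- The left-continuous quantile function of the Beta distribution `B(1/2, α)`. -/
noncomputable def betaHalfQuantile (α : ℝ) (u : ℝ) : ℝ :=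
  sInf {x : ℝ | u ≤ betaHalfCDF α x}

lemma betaHalfPDF_eq (α : ℝ) : betaHalfPDF α = ProbabilityTheory.betaPDFReal (1 / 2) α := by
  funext x
  change Set.indicator (Set.Ioo 0 1) (fun z : ℝ => z ^ (-(1 / 2) : ℝ) * (1 - z) ^ (α - 1) /
    ProbabilityTheory.beta (1 / 2) α) x = _
  unfold ProbabilityTheory.betaPDFReal
  rw [Set.indicator_apply]
  simp only [Set.mem_Ioo]
  split_ifs
  · rw [show (1 / 2 - 1 : ℝ) = -(1 / 2) by norm_num]
    ring
  · rfl

lemma betaHalfPDF_pos {α x : ℝ} (hα : 0 < α) (h0 : 0 < x) (h1 : x < 1) :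
    0 < betaHalfPDF α x := by
  rw [betaHalfPDF_eq]
  exact ProbabilityTheory.betaPDFReal_pos h0 h1 (by norm_num) hα

lemma betaHalfPDF_nonneg {α : ℝ} (hα : 0 < α) (x : ℝ) : 0 ≤ betaHalfPDF α x := by
  by_cases h : x ∈ Set.Ioo (0 : ℝ) 1
  · exact (betaHalfPDF_pos hα h.1 h.2).le
  · rw [betaHalfPDF, Set.indicator_of_notMem h]

lemma measurable_betaHalfPDF (α : ℝ) : Measurable (betaHalfPDF α) := by
  rw [betaHalfPDF_eq]
  fun_prop

lemma lintegral_betaHalfPDF {α : ℝ} (hα : 0 < α) :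
    ∫⁻ x, ENNReal.ofReal (betaHalfPDF α x) = 1 := by
  rw [betaHalfPDF_eq]
  exact ProbabilityTheory.lintegral_betaPDF_eq_one (by norm_num) hα

lemma integrable_betaHalfPDF {α : ℝ} (hα : 0 < α) : Integrable (betaHalfPDF α) := by
  refine ⟨(measurable_betaHalfPDF α).aestronglyMeasurable, ?_⟩
  rw [hasFiniteIntegral_iff_ofReal (ae_of_all _ (betaHalfPDF_nonneg hα)),
    lintegral_betaHalfPDF hα]
  exact ENNReal.one_lt_top

lemma integral_betaHalfPDF {α : ℝ} (hα : 0 < α) : ∫ x, betaHalfPDF α x = 1 := by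
  rw [integral_eq_lintegral_of_nonneg_ae (ae_of_all _ (betaHalfPDF_nonneg hα))
    (measurable_betaHalfPDF α).aestronglyMeasurable, lintegral_betaHalfPDF hα]
  rfl

lemma betaHalfCDF_of_nonpos (α : ℝ) {x : ℝ} (hx : x ≤ 0) : betaHalfCDF α x = 0 := by
  refine setIntegral_eq_zero_of_forall_eq_zero fun t ht => ?_
  exact Set.indicator_of_notMem (fun h => absurd h.1 (not_lt.2 (le_trans ht hx))) _

lemma betaHalfCDF_one {α : ℝ} (hα : 0 < α) : betaHalfCDF α 1 = 1 := by
  refine Eq.trans ?_ (integral_betaHalfPDF hα)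
  refine setIntegral_eq_integral_of_forall_compl_eq_zero fun t ht => ?_
  exact Set.indicator_of_notMem (fun h => ht h.2.le) _

lemma betaHalfCDF_sub {α : ℝ} (hα : 0 < α) (x y : ℝ) :
    betaHalfCDF α y - betaHalfCDF α x = ∫ t in x..y, betaHalfPDF α t :=
  intervalIntegral.integral_Iic_sub_Iic (integrable_betaHalfPDF hα).integrableOn
    (integrable_betaHalfPDF hα).integrableOn

lemma betaHalfCDF_eq_intervalIntegral {α : ℝ} (hα : 0 < α) :
    betaHalfCDF α = fun y => ∫ t in (0 : ℝ)..y, betaHalfPDF α t := by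
  funext y
  rw [← betaHalfCDF_sub hα, betaHalfCDF_of_nonpos α le_rfl, sub_zero]

lemma continuous_betaHalfCDF {α : ℝ} (hα : 0 < α) : Continuous (betaHalfCDF α) := by
  rw [betaHalfCDF_eq_intervalIntegral hα]
  exact (integrable_betaHalfPDF hα).continuous_primitive 0

lemma betaHalfCDF_strictMonoOn {α : ℝ} (hα : 0 < α) :
    StrictMonoOn (betaHalfCDF α) (Set.Icc 0 1) := by
  intro x hx y hy hxy
  rw [← sub_pos, betaHalfCDF_sub hα]
  exact intervalIntegral.intervalIntegral_pos_of_pos_on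
    (integrable_betaHalfPDF hα).intervalIntegrable
    (fun t ht => betaHalfPDF_pos hα (hx.1.trans_lt ht.1) (ht.2.trans_le hy.2)) hxy

lemma betaHalfCDF_mono {α : ℝ} (hα : 0 < α) : Monotone (betaHalfCDF α) := by
  intro x y hxy
  rw [← sub_nonneg, betaHalfCDF_sub hα]
  exact intervalIntegral.integral_nonneg hxy fun t _ => betaHalfPDF_nonneg hα t

lemma betaHalfCDF_mem {α x : ℝ} (hα : 0 < α) (h0 : 0 < x) (h1 : x < 1) :
    0 < betaHalfCDF α x ∧ betaHalfCDF α x < 1 := by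
  have hx : x ∈ Set.Icc (0 : ℝ) 1 := ⟨h0.le, h1.le⟩
  constructor
  · rw [← betaHalfCDF_of_nonpos α le_rfl]
    exact betaHalfCDF_strictMonoOn hα (by simp) hx h0
  · rw [← betaHalfCDF_one hα]
    exact betaHalfCDF_strictMonoOn hα hx (by simp) h1

lemma betaHalfQuantile_CDF {α x : ℝ} (hα : 0 < α) (h0 : 0 < x) (h1 : x < 1) :
    betaHalfQuantile α (betaHalfCDF α x) = x := by
  have : {y : ℝ | betaHalfCDF α x ≤ betaHalfCDF α y} = Set.Ici x := by
    ext y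
    refine ⟨fun h => ?_, fun h => betaHalfCDF_mono hα h⟩
    by_contra hy
    have hyx : y < x := not_le.1 hy
    have h2 : betaHalfCDF α (max y 0) < betaHalfCDF α x :=
      betaHalfCDF_strictMonoOn hα ⟨le_max_right _ _, max_le (hyx.trans h1).le zero_le_one⟩
        ⟨h0.le, h1.le⟩ (max_lt hyx h0)
    exact absurd ((betaHalfCDF_mono hα (le_max_left y 0)).trans_lt h2) (not_lt.2 h)
  rw [betaHalfQuantile, this, csInf_Ici]

lemma exists_betaHalfCDF_eq {α u : ℝ} (hα : 0 < α) (h0 : 0 < u) (h1 : u < 1) :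
    ∃ x, 0 < x ∧ x < 1 ∧ betaHalfCDF α x = u := by
  have h := intermediate_value_Ioo (zero_le_one (α := ℝ)) (continuous_betaHalfCDF hα).continuousOn
  rw [betaHalfCDF_of_nonpos α le_rfl, betaHalfCDF_one hα] at h
  obtain ⟨x, hx, rfl⟩ := h ⟨h0, h1⟩
  exact ⟨x, hx.1, hx.2, rfl⟩

lemma betaHalfQuantile_mem {α u : ℝ} (hα : 0 < α) (h0 : 0 < u) (h1 : u < 1) :
    0 < betaHalfQuantile α u ∧ betaHalfQuantile α u < 1 := by
  obtain ⟨x, hx0, hx1, rfl⟩ := exists_betaHalfCDF_eq hα h0 h1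
  rw [betaHalfQuantile_CDF hα hx0 hx1]
  exact ⟨hx0, hx1⟩

lemma betaHalfCDF_quantile {α u : ℝ} (hα : 0 < α) (h0 : 0 < u) (h1 : u < 1) :
    betaHalfCDF α (betaHalfQuantile α u) = u := by
  obtain ⟨x, hx0, hx1, rfl⟩ := exists_betaHalfCDF_eq hα h0 h1
  rw [betaHalfQuantile_CDF hα hx0 hx1]

lemma betaHalfQuantile_mono {α u v : ℝ} (hα : 0 < α) (h0 : 0 < u) (huv : u ≤ v) (h1 : v < 1) :
    betaHalfQuantile α u ≤ betaHalfQuantile α v := by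
  by_contra! h
  have hu := betaHalfQuantile_mem hα h0 (huv.trans_lt h1)
  have hv := betaHalfQuantile_mem hα (h0.trans_le huv) h1
  have := betaHalfCDF_strictMonoOn hα ⟨hv.1.le, hv.2.le⟩ ⟨hu.1.le, hu.2.le⟩ h
  rw [betaHalfCDF_quantile hα h0 (huv.trans_lt h1),
    betaHalfCDF_quantile hα (h0.trans_le huv) h1] at this
  linarith

/-- The difference of the quantile functions is monotone and squeezed to `0` at both endpoints,
so dispersive comparability forces equality. -/
lemma quantile_eq_of_disp {α₁ α₂ : ℝ} (hα₁ : 0 < α₁) (hα₂ : 0 < α₂)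
    (h : ∀ u v : ℝ, 0 < u → u ≤ v → v < 1 →
        betaHalfQuantile α₁ v - betaHalfQuantile α₁ u ≤
          betaHalfQuantile α₂ v - betaHalfQuantile α₂ u)
    {u : ℝ} (h0 : 0 < u) (h1 : u < 1) : betaHalfQuantile α₁ u = betaHalfQuantile α₂ u := by
  apply le_antisymm
  -- Compare `u` with a level close to `0`, where `Q₁ ≤ ε` and `Q₂ > 0`.
  · refine le_of_forall_pos_lt_add fun ε hε => ?_
    by_cases hε1 : ε < 1
    · have hF := betaHalfCDF_mem hα₁ hε hε1
      have hpos : 0 < min u (betaHalfCDF α₁ ε) := lt_min h0 hF.1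
      have hd := h _ u hpos (min_le_left _ _) h1
      have hm := betaHalfQuantile_mono hα₁ hpos (min_le_right _ _) hF.2
      rw [betaHalfQuantile_CDF hα₁ hε hε1] at hm
      have := (betaHalfQuantile_mem hα₂ hpos ((min_le_left _ _).trans_lt h1)).1
      linarith
    · have := (betaHalfQuantile_mem hα₁ h0 h1).2
      have := (betaHalfQuantile_mem hα₂ h0 h1).1
      linarith
  -- Compare `u` with a level close to `1`, where `Q₁ ≥ 1 - ε` and `Q₂ < 1`.
  · refine le_of_forall_pos_lt_add fun ε hε => ?_
    by_cases hε1 : ε < 1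
    · have hF := betaHalfCDF_mem hα₁ (x := 1 - ε) (by linarith) (by linarith)
      have hlt : max u (betaHalfCDF α₁ (1 - ε)) < 1 := max_lt h1 hF.2
      have hd := h u _ h0 (le_max_left _ _) hlt
      have hm := betaHalfQuantile_mono hα₁ hF.1 (le_max_right u _) hlt
      rw [betaHalfQuantile_CDF hα₁ (by linarith) (by linarith)] at hm
      have := (betaHalfQuantile_mem hα₂ (h0.trans_le (le_max_left _ _)) hlt).2
      linarith
    · have := (betaHalfQuantile_mem hα₂ h0 h1).2
      have := (betaHalfQuantile_mem hα₁ h0 h1).1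
      linarith

lemma hasDerivAt_betaHalfCDF {α x : ℝ} (hα : 0 < α) (h0 : 0 < x) (h1 : x < 1) :
    HasDerivAt (betaHalfCDF α) (betaHalfPDF α x) x := by
  rw [betaHalfCDF_eq_intervalIntegral hα]
  refine intervalIntegral.integral_hasDerivAt_right
    (integrable_betaHalfPDF hα).intervalIntegrable
    ((measurable_betaHalfPDF α).stronglyMeasurable.stronglyMeasurableAtFilter) ?_
  have hc : ContinuousAt (fun z : ℝ => z ^ (-(1 / 2) : ℝ) * (1 - z) ^ (α - 1) /
      (Real.Gamma (1 / 2) * Real.Gamma α / Real.Gamma (1 / 2 + α))) x := by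
    refine ((Real.continuousAt_rpow_const x _ (Or.inl h0.ne')).mul ?_).div_const _
    exact (continuousAt_const.sub continuousAt_id).rpow_const (Or.inl (by simp; linarith))
  refine hc.congr ?_
  filter_upwards [Ioo_mem_nhds h0 h1] with z hz
  rw [betaHalfPDF, Set.indicator_of_mem hz]

lemma log_betaHalfPDF {α x : ℝ} (hα : 0 < α) (h0 : 0 < x) (h1 : x < 1) :
    Real.log (betaHalfPDF α x) = -(1 / 2) * Real.log x + (α - 1) * Real.log (1 - x)
      - Real.log (ProbabilityTheory.beta (1 / 2) α) := by
  have hx : 0 < 1 - x := by linarith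
  have hB := ProbabilityTheory.beta_pos (α := 1 / 2) (by norm_num) hα
  rw [betaHalfPDF, Set.indicator_of_mem (Set.mem_Ioo.2 ⟨h0, h1⟩)]
  change Real.log (_ / ProbabilityTheory.beta (1 / 2) α) = _
  rw [Real.log_div (by positivity) hB.ne', Real.log_mul (by positivity) (by positivity),
    Real.log_rpow h0, Real.log_rpow hx]

/-- For `n = 2`, the statistic `1/α̂` (which has the Beta `(1/2, α)`
distribution) is not dispersively monotone in the shape parameter `α`: for `α₁ ≠ α₂`,
the Beta `(1/2, α₁)` distribution is never dispersively smaller than `Beta (1/2, α₂)`. -/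
theorem inv_momentEstimator_not_dispersive_monotone
    (α₁ α₂ : ℝ) (hα₁ : 0 < α₁) (hα₂ : 0 < α₂) (hne : α₁ ≠ α₂) :
    ¬ (∀ u v : ℝ, 0 < u → u ≤ v → v < 1 →
        betaHalfQuantile α₁ v - betaHalfQuantile α₁ u ≤
          betaHalfQuantile α₂ v - betaHalfQuantile α₂ u) := by
  intro h
  have hcdf : ∀ x, 0 < x → x < 1 → betaHalfCDF α₁ x = betaHalfCDF α₂ x := by
    intro x h0 h1
    have hF := betaHalfCDF_mem hα₁ h0 h1
    have hq := quantile_eq_of_disp hα₁ hα₂ h hF.1 hF.2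
    rw [betaHalfQuantile_CDF hα₁ h0 h1] at hq
    have := betaHalfCDF_quantile hα₂ hF.1 hF.2
    rw [← hq] at this
    exact this.symm
  have hpdf : ∀ x, 0 < x → x < 1 → betaHalfPDF α₁ x = betaHalfPDF α₂ x := by
    intro x h0 h1
    refine (hasDerivAt_betaHalfCDF hα₁ h0 h1).unique
      ((hasDerivAt_betaHalfCDF hα₂ h0 h1).congr_of_eventuallyEq ?_)
    filter_upwards [Ioo_mem_nhds h0 h1] with z hz using hcdf z hz.1 hz.2
  have e1 := congrArg Real.log (hpdf (1 / 2) (by norm_num) (by norm_num))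
  have e2 := congrArg Real.log (hpdf (3 / 4) (by norm_num) (by norm_num))
  rw [log_betaHalfPDF hα₁ (by norm_num) (by norm_num),
    log_betaHalfPDF hα₂ (by norm_num) (by norm_num)] at e1 e2
  have l1 : Real.log (1 - 1 / 2) = -Real.log 2 := by
    rw [← Real.log_inv]
    norm_num
  have l2 : Real.log (1 - 3 / 4) = -(2 * Real.log 2) := by
    rw [show (1 - 3 / 4 : ℝ) = ((2 : ℝ) ^ 2)⁻¹ by norm_num, Real.log_inv, Real.log_pow]
    norm_num
  rw [l1] at e1
  rw [l2] at e2
  have hl : 0 < Real.log 2 := Real.log_pos (by norm_num)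
  -- Subtracting the two identities cancels the normalizing constants.
  have hz : (α₁ - α₂) * Real.log 2 = 0 := by linarith
  rcases mul_eq_zero.1 hz with h' | h'
  · exact hne (sub_eq_zero.1 h')
  · exact hl.ne' h'
end

section
/- For sample size n = 2, the moment estimator α̂ is dispersively increasing in the shape parameter α: for any 0 < α₁ < α₂, the distribution with density f^{α₁}(x) = (1/B(1/2,α₁)) x^{−3/2}(1 − 1/x)^{α₁−1} on (1,∞) is dispersively smaller than the distribution with density f^{α₂}(x) = (1/B(1/2,α₂)) x^{−3/2}(1 − 1/x)^{α₂−1} on (1,∞); that is, if F and G denote the corresponding cumulative distribution functions, then F⁻¹(v) − F⁻¹(u) ≤ G⁻¹(v) − G⁻¹(u) for all 0 < u ≤ v < 1. -/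
/-!
Write `F₁, F₂` for the two distribution functions, `f₁, f₂` for the densities, and fix a shift
`a ≥ 0`. For `x > 1` the derivative of `log f₁(x) - log f₂(x + a)` has the sign of a quadratic
polynomial in `z = x - 1` with negative leading coefficient, whose constant term
`(α₁ - 1) a (1 + a)` is nonnegative when `α₁ ≥ 1` and whose linear coefficient is nonpositive when
`α₁ ≤ 1`. In both cases this quadratic, once negative on `z > 0`, stays negative
(`shiftQuad_neg_of_neg`), so the log-ratio is unimodal and the set where `f₁(x) > f₂(x + a)` is an
interval (see `pdf_shift_lt_of_lt`); for `a = 0` the log-ratio is decreasing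
(`pdf_lt_of_lt`).

Consequently `d(x) = F₁(x) - F₂(x + a)`, which is `≤ 0` at `x = 1` and tends to `0` at infinity,
cannot become negative after a zero: the mean value theorem would give points `r < p < q` where
`d'` is positive, negative, positive. The case `a = 0` is the usual stochastic order `F₂ ≤ F₁`
(`cdf_le`), so that `a = F₂⁻¹(u) - F₁⁻¹(u)` is nonnegative; applying the statement on `d` with this
shift at the zero `x = F₁⁻¹(u)` gives `F₁(F₂⁻¹(v) - a) ≥ v`, which is the claim.
-/

open MeasureTheory

/-- The density of the moment estimator `α̂` for sample size `n = 2` from a gamma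
distribution with shape `α`: `f^α(x) = (1/B(1/2,α)) x^{-3/2}(1-1/x)^{α-1}` for `x > 1`,
extended by `0` elsewhere. -/
noncomputable def alphaHatPDF (α : ℝ) : ℝ → ℝ :=
  Set.indicator (Set.Ioi 1) (fun x =>
    (1 / (Real.Gamma (1 / 2) * Real.Gamma α / Real.Gamma (1 / 2 + α))) *
      x ^ (-(3 / 2) : ℝ) * (1 - 1 / x) ^ (α - 1))

/-- The cumulative distribution function of `α̂` for sample size `n = 2`. -/
noncomputable def alphaHatCDF (α : ℝ) (x : ℝ) : ℝ :=
  ∫ t in Set.Iic x, alphaHatPDF α t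

/-- The left-continuous quantile function of `α̂` for sample size `n = 2`. -/
noncomputable def alphaHatQuantile (α : ℝ) (u : ℝ) : ℝ :=
  sInf {x : ℝ | u ≤ alphaHatCDF α x}

namespace MomentEstimator

open Set Filter Topology ProbabilityTheory

/-! ### The density -/

lemma pdf_of_one_lt (α : ℝ) {x : ℝ} (hx : 1 < x) :
    alphaHatPDF α x = (1 / beta (1 / 2) α) * x ^ (-(3 / 2) : ℝ) * (1 - 1 / x) ^ (α - 1) := by
  rw [alphaHatPDF, indicator_of_mem (mem_Ioi.2 hx), beta]

lemma one_sub_one_div_pos {x : ℝ} (hx : 1 < x) : 0 < 1 - 1 / x := by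
  have := (div_lt_one (by linarith : (0 : ℝ) < x)).2 hx
  linarith

lemma pdf_pos {α x : ℝ} (hα : 0 < α) (hx : 1 < x) : 0 < alphaHatPDF α x := by
  rw [pdf_of_one_lt α hx]
  have h0 := beta_pos (by norm_num : (0 : ℝ) < 1 / 2) hα
  have h1 := Real.rpow_pos_of_pos (by linarith : (0 : ℝ) < x) (-(3 / 2))
  have h2 := Real.rpow_pos_of_pos (one_sub_one_div_pos hx) (α - 1)
  positivity

lemma pdf_of_le_one (α : ℝ) {x : ℝ} (hx : x ≤ 1) : alphaHatPDF α x = 0 :=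
  indicator_of_notMem (by simpa using hx) _

lemma log_pdf {α x : ℝ} (hα : 0 < α) (hx : 1 < x) :
    Real.log (alphaHatPDF α x) = Real.log (1 / beta (1 / 2) α)
      + (α - 1) * Real.log (x - 1) - (α + 1 / 2) * Real.log x := by
  have hx0 : (0 : ℝ) < x := by linarith
  have h0 := beta_pos (by norm_num : (0 : ℝ) < 1 / 2) hα
  have h1 := Real.rpow_pos_of_pos hx0 (-(3 / 2))
  have h2 := Real.rpow_pos_of_pos (one_sub_one_div_pos hx) (α - 1)
  have h3 : 1 - 1 / x = (x - 1) / x := by field_simp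
  rw [pdf_of_one_lt α hx, Real.log_mul (by positivity) h2.ne',
    Real.log_mul (by positivity) h1.ne', Real.log_rpow hx0,
    Real.log_rpow (one_sub_one_div_pos hx), h3, Real.log_div (by linarith) hx0.ne']
  ring

lemma continuousAt_pdf (α : ℝ) {x : ℝ} (hx : 1 < x) : ContinuousAt (alphaHatPDF α) x := by
  have h : ContinuousAt (fun x : ℝ => (1 / beta (1 / 2) α) * x ^ (-(3 / 2) : ℝ)
      * (1 - 1 / x) ^ (α - 1)) x := by
    have hx0 : x ≠ 0 := by linarith
    refine (continuousAt_const.mul (continuousAt_id.rpow_const (Or.inl hx0))).mul ?_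
    refine ContinuousAt.rpow_const ?_ (Or.inl (one_sub_one_div_pos hx).ne')
    exact continuousAt_const.sub (continuousAt_const.div continuousAt_id hx0)
  refine h.congr ?_
  filter_upwards [Ioi_mem_nhds hx] with y hy
  exact (pdf_of_one_lt α hy).symm

lemma integrable_betaPDFReal {a b : ℝ} (ha : 0 < a) (hb : 0 < b) :
    Integrable (betaPDFReal a b) ∧ ∫ x, betaPDFReal a b x = 1 := by
  have hnn : 0 ≤ᵐ[volume] betaPDFReal a b := by
    refine ae_of_all _ fun x => ?_
    by_cases hx : 0 < x ∧ x < 1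
    · exact (betaPDFReal_pos hx.1 hx.2 ha hb).le
    · simp [betaPDFReal, hx]
  have hm := (measurable_betaPDFReal a b).aestronglyMeasurable (μ := volume)
  have h1 : ∫⁻ x, ENNReal.ofReal (betaPDFReal a b x) = 1 := lintegral_betaPDF_eq_one ha hb
  constructor
  · rw [← lintegral_ofReal_ne_top_iff_integrable hm hnn, h1]
    simp
  · rw [integral_eq_lintegral_of_nonneg_ae hnn hm, h1]
    simp

lemma image_inv_Ioo : (fun w : ℝ => w⁻¹) '' Ioo 0 1 = Ioi 1 := by
  ext x
  constructor
  · rintro ⟨w, hw, rfl⟩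
    exact (one_lt_inv₀ hw.1).2 hw.2
  · intro hx
    have hx' : 1 < x := hx
    exact ⟨x⁻¹, ⟨by positivity, inv_lt_one_of_one_lt₀ hx'⟩, inv_inv x⟩

/-- The reciprocal of a `Beta(1/2, α)` variable has density `alphaHatPDF α`. -/
lemma abs_deriv_smul_pdf_inv (α : ℝ) {w : ℝ} (hw : w ∈ Ioo (0 : ℝ) 1) :
    |-(w ^ 2)⁻¹| • alphaHatPDF α w⁻¹ = betaPDFReal (1 / 2) α w := by
  have hw0 := hw.1
  rw [pdf_of_one_lt α ((one_lt_inv₀ hw.1).2 hw.2), betaPDFReal, if_pos ⟨hw.1, hw.2⟩, abs_neg,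
    abs_of_pos (by positivity), one_div w⁻¹, inv_inv, smul_eq_mul, Real.inv_rpow hw0.le,
    ← Real.rpow_neg hw0.le, ← Real.rpow_natCast, ← Real.rpow_neg hw0.le]
  have : w ^ ((1 : ℝ) / 2 - 1) = w ^ (-((2 : ℕ) : ℝ)) * w ^ (-(-(3 / 2)) : ℝ) := by
    rw [← Real.rpow_add hw0]
    norm_num
  rw [this]
  ring

lemma integrable_pdf {α : ℝ} (hα : 0 < α) :
    Integrable (alphaHatPDF α) ∧ ∫ x, alphaHatPDF α x = 1 := by
  have hd : ∀ w ∈ Ioo (0 : ℝ) 1,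
      HasDerivWithinAt (fun w : ℝ => w⁻¹) (-(w ^ 2)⁻¹) (Ioo 0 1) w := fun w hw =>
    (hasDerivAt_inv hw.1.ne').hasDerivWithinAt
  have hinj : InjOn (fun w : ℝ => w⁻¹) (Ioo 0 1) := fun x _ y _ h => inv_injective h
  obtain ⟨hi, h1⟩ := integrable_betaPDFReal (by norm_num : (0 : ℝ) < 1 / 2) hα
  have hind : (Ioi (1 : ℝ)).indicator (alphaHatPDF α) = alphaHatPDF α := by
    rw [alphaHatPDF, indicator_indicator, inter_self]
  have hind2 : (Ioo (0 : ℝ) 1).indicator (betaPDFReal (1 / 2) α) = betaPDFReal (1 / 2) α := by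
    refine indicator_eq_self.2 fun x hx => ?_
    by_contra hx'
    exact hx (if_neg hx')
  constructor
  · rw [← hind, integrable_indicator_iff measurableSet_Ioi, ← image_inv_Ioo,
      integrableOn_image_iff_integrableOn_abs_deriv_smul measurableSet_Ioo hd hinj]
    exact hi.integrableOn.congr_fun (fun w hw => (abs_deriv_smul_pdf_inv α hw).symm)
      measurableSet_Ioo
  · rw [← hind, integral_indicator measurableSet_Ioi, ← image_inv_Ioo,
      integral_image_eq_integral_abs_deriv_smul measurableSet_Ioo hd hinj,
      setIntegral_congr_fun measurableSet_Ioo (fun w hw => abs_deriv_smul_pdf_inv α hw),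
      ← integral_indicator measurableSet_Ioo, hind2, h1]

/-! ### The distribution function and its quantiles -/

lemma cdf_eq {α : ℝ} (hα : 0 < α) (x : ℝ) :
    alphaHatCDF α x = alphaHatCDF α 1 + ∫ t in (1 : ℝ)..x, alphaHatPDF α t := by
  have hi := (integrable_pdf hα).1
  have := intervalIntegral.integral_Iic_sub_Iic (a := 1) (b := x) hi.integrableOn hi.integrableOn
  rw [← this, alphaHatCDF, alphaHatCDF]
  ring

lemma cdf_of_le_one (α : ℝ) {x : ℝ} (hx : x ≤ 1) : alphaHatCDF α x = 0 := by
  rw [alphaHatCDF]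
  exact setIntegral_eq_zero_of_forall_eq_zero fun t ht => pdf_of_le_one α (le_trans ht hx)

lemma continuous_cdf {α : ℝ} (hα : 0 < α) : Continuous (alphaHatCDF α) := by
  have h := intervalIntegral.continuous_primitive
    (fun a b => (integrable_pdf hα).1.intervalIntegrable (a := a) (b := b)) 1
  rw [show alphaHatCDF α = _ from funext (cdf_eq hα)]
  exact continuous_const.add h

lemma hasDerivAt_cdf {α x : ℝ} (hα : 0 < α) (hx : 1 < x) :
    HasDerivAt (alphaHatCDF α) (alphaHatPDF α x) x := by
  have hi := (integrable_pdf hα).1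
  rw [show alphaHatCDF α = _ from funext (cdf_eq hα)]
  exact (intervalIntegral.integral_hasDerivAt_right hi.intervalIntegrable
    hi.aestronglyMeasurable.stronglyMeasurableAtFilter (continuousAt_pdf α hx)).const_add _

lemma tendsto_cdf {α : ℝ} (hα : 0 < α) : Tendsto (alphaHatCDF α) atTop (𝓝 1) := by
  have hi := integrable_pdf hα
  have := (aecover_Iic (μ := volume) (tendsto_id (α := ℝ) (x := atTop))
    ).integral_tendsto_of_countably_generated hi.1
  rw [hi.2] at this
  exact this

lemma strictMonoOn_cdf {α : ℝ} (hα : 0 < α) : StrictMonoOn (alphaHatCDF α) (Ici 1) := by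
  refine strictMonoOn_of_deriv_pos (convex_Ici 1) (continuous_cdf hα).continuousOn fun x hx => ?_
  rw [interior_Ici] at hx
  rw [(hasDerivAt_cdf hα hx).deriv]
  exact pdf_pos hα hx

/-- On `(0, 1)` the quantile function is the genuine inverse of the distribution function. -/
lemma quantile_spec {α u : ℝ} (hα : 0 < α) (hu0 : 0 < u) (hu1 : u < 1) :
    1 < alphaHatQuantile α u ∧ alphaHatCDF α (alphaHatQuantile α u) = u ∧
      ∀ x, u ≤ alphaHatCDF α x → alphaHatQuantile α u ≤ x := by
  obtain ⟨b, hb1, hbu⟩ := ((eventually_ge_atTop (1 : ℝ)).and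
    ((tendsto_cdf hα).eventually_const_lt hu1)).exists
  obtain ⟨x, hx, hxu⟩ := intermediate_value_Icc hb1 (continuous_cdf hα).continuousOn
    (show u ∈ Icc (alphaHatCDF α 1) (alphaHatCDF α b) from
      ⟨by rw [cdf_of_le_one α le_rfl]; exact hu0.le, hbu.le⟩)
  have hx1 : 1 < x := by
    by_contra! h
    rw [cdf_of_le_one α h] at hxu
    linarith
  have hlow : ∀ y, u ≤ alphaHatCDF α y → x ≤ y := by
    intro y hy
    by_contra! hyx
    rcases le_total y 1 with h | h
    · rw [cdf_of_le_one α h] at hy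
      linarith
    · have := strictMonoOn_cdf hα h hx1.le hyx
      linarith
  have hq : alphaHatQuantile α u = x :=
    IsLeast.csInf_eq ⟨hxu.ge, fun y hy => hlow y hy⟩
  rw [hq]
  exact ⟨hx1, hxu, hlow⟩

/-! ### Unimodality of the shifted likelihood ratio -/

/-- Numerator, as a polynomial in `z = x - 1`, of the derivative in `x` of
`log f₁(x) - log f₂(x + a)`, where `f₁, f₂` are the densities with shapes `α, β`. -/
noncomputable def shiftQuad (α β a z : ℝ) : ℝ :=
  (α - β - 3 / 2 * a) * z ^ 2 + (α - β + 2 * a * (α - 1) - 3 / 2 * a ^ 2) * z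
    + (α - 1) * a * (1 + a)

lemma shiftQuad_neg_of_neg {α β a s t : ℝ} (hαβ : α < β) (ha : 0 ≤ a) (hs : 0 < s) (hst : s ≤ t)
    (h : shiftQuad α β a s < 0) : shiftQuad α β a t < 0 := by
  unfold shiftQuad at *
  have hA : α - β - 3 / 2 * a < 0 := by linarith
  have ht : 0 < t := by linarith
  rcases le_total 1 α with h1 | h1
  -- for `1 ≤ α`, concavity: the value at `s` dominates the chord from `0` to `t`, and the value
  -- at `0` is `≥ 0`; for `α ≤ 1`, all coefficients are nonpositive
  · have hC : 0 ≤ (α - 1) * a * (1 + a) := by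
      have : 0 ≤ α - 1 := by linarith
      positivity
    set A := α - β - 3 / 2 * a
    set B := α - β + 2 * a * (α - 1) - 3 / 2 * a ^ 2
    set C := (α - 1) * a * (1 + a)
    have h2 : s * (A * t ^ 2 + B * t + C) = t * (A * s ^ 2 + B * s + C)
        + A * (s * t * (t - s)) - C * (t - s) := by ring
    have h3 : 0 ≤ s * t * (t - s) := mul_nonneg (by positivity) (by linarith)
    have h4 : t * (A * s ^ 2 + B * s + C) < 0 := mul_neg_of_pos_of_neg ht h
    have h5 : A * (s * t * (t - s)) ≤ 0 := mul_nonpos_of_nonpos_of_nonneg hA.le h3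
    have h6 : 0 ≤ C * (t - s) := mul_nonneg hC (by linarith)
    by_contra! h7
    have := mul_nonneg hs.le h7
    linarith
  · have hB : α - β + 2 * a * (α - 1) - 3 / 2 * a ^ 2 ≤ 0 := by
      nlinarith [mul_nonneg ha (sub_nonneg.2 h1), sq_nonneg a]
    have hC : (α - 1) * a * (1 + a) ≤ 0 := by
      nlinarith [mul_nonneg (mul_nonneg ha (sub_nonneg.2 h1)) (by linarith : 0 ≤ 1 + a)]
    have h5 := mul_neg_of_neg_of_pos hA (by positivity : 0 < t ^ 2)
    have h6 := mul_nonpos_of_nonpos_of_nonneg hB ht.le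
    linarith

/-- The logarithm of the likelihood ratio `f₁(x) / f₂(x + a)`. -/
noncomputable def logRatio (α β a x : ℝ) : ℝ :=
  Real.log (alphaHatPDF α x) - Real.log (alphaHatPDF β (x + a))

lemma logRatio_neg_iff {α β a x : ℝ} (hα : 0 < α) (hβ : 0 < β) (ha : 0 ≤ a) (hx : 1 < x) :
    logRatio α β a x < 0 ↔ alphaHatPDF α x < alphaHatPDF β (x + a) := by
  rw [logRatio, sub_neg, Real.log_lt_log_iff (pdf_pos hα hx) (pdf_pos hβ (by linarith))]

lemma logRatio_pos_iff {α β a x : ℝ} (hα : 0 < α) (hβ : 0 < β) (ha : 0 ≤ a) (hx : 1 < x) :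
    0 < logRatio α β a x ↔ alphaHatPDF β (x + a) < alphaHatPDF α x := by
  rw [logRatio, sub_pos, Real.log_lt_log_iff (pdf_pos hβ (by linarith)) (pdf_pos hα hx)]

lemma hasDerivAt_logRatio {α β a x : ℝ} (hα : 0 < α) (hβ : 0 < β) (ha : 0 ≤ a) (hx : 1 < x) :
    HasDerivAt (logRatio α β a)
      (shiftQuad α β a (x - 1) / ((x - 1) * x * ((x + a - 1) * (x + a)))) x := by
  have e1 : x - 1 ≠ 0 := by linarith
  have e2 : x ≠ 0 := by linarith
  have e3 : x + a - 1 ≠ 0 := by linarith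
  have e4 : x + a ≠ 0 := by linarith
  have d1 := (((hasDerivAt_id x).sub_const 1).log e1).const_mul (α - 1)
  have d2 := ((hasDerivAt_id x).log e2).const_mul (α + 1 / 2)
  have d3 := ((((hasDerivAt_id x).add_const a).sub_const 1).log e3).const_mul (β - 1)
  have d4 := (((hasDerivAt_id x).add_const a).log e4).const_mul (β + 1 / 2)
  have d := ((d1.sub d2).sub (d3.sub d4)).const_add
    (Real.log (1 / beta (1 / 2) α) - Real.log (1 / beta (1 / 2) β))
  refine (d.congr_of_eventuallyEq ?_).congr_deriv ?_
  · filter_upwards [Ioi_mem_nhds hx] with y hy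
    have hy' : 1 < y := hy
    rw [logRatio, log_pdf hα hy', log_pdf hβ (by linarith)]
    simp only [id, Pi.sub_apply]
    ring
  · simp only [id]
    unfold shiftQuad
    field_simp
    ring

lemma logRatio_antitone {α β a s p q : ℝ} (hα : 0 < α) (hαβ : α < β) (ha : 0 ≤ a) (hs : 1 < s)
    (hN : shiftQuad α β a (s - 1) < 0) (hsp : s ≤ p) (hpq : p ≤ q) :
    logRatio α β a q ≤ logRatio α β a p := by
  have hβ : 0 < β := hα.trans hαβ
  have hd : ∀ x ∈ Ici s, HasDerivAt (logRatio α β a) _ x := fun x hx =>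
    hasDerivAt_logRatio hα hβ ha (lt_of_lt_of_le hs hx)
  refine antitoneOn_of_deriv_nonpos (convex_Ici s)
    (fun x hx => (hd x hx).continuousAt.continuousWithinAt)
    (fun x hx => (hd x (interior_subset hx)).differentiableAt.differentiableWithinAt)
    (fun x hx => ?_) hsp (hsp.trans hpq) hpq
  have hx' : s ≤ x := interior_subset hx
  rw [(hd x hx').deriv]
  refine div_nonpos_of_nonpos_of_nonneg
    (shiftQuad_neg_of_neg hαβ ha (by linarith) (by linarith) hN).le ?_
  have h1 : 0 ≤ x - 1 := by linarith
  have h2 : 0 ≤ x := by linarith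
  have h3 : 0 ≤ x + a - 1 := by linarith
  positivity

/-- Once `f₁(x) - f₂(x + a)` has gone from positive to negative it stays negative: the log-ratio has
then passed its maximum. -/
lemma pdf_shift_lt_of_lt {α β a r p q : ℝ} (hα : 0 < α) (hαβ : α < β) (ha : 0 ≤ a) (hr : 1 < r)
    (hrp : r < p) (hpq : p < q) (h1 : alphaHatPDF β (r + a) < alphaHatPDF α r)
    (h2 : alphaHatPDF α p < alphaHatPDF β (p + a)) :
    alphaHatPDF α q < alphaHatPDF β (q + a) := by
  have hβ : 0 < β := hα.trans hαβ
  rw [← logRatio_pos_iff hα hβ ha hr] at h1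
  rw [← logRatio_neg_iff hα hβ ha (hr.trans hrp)] at h2
  rw [← logRatio_neg_iff hα hβ ha (by linarith)]
  obtain ⟨s, hs, hs'⟩ := exists_hasDerivAt_eq_slope (logRatio α β a) _ hrp
    (fun x hx => (hasDerivAt_logRatio hα hβ ha
      (lt_of_lt_of_le hr hx.1)).continuousAt.continuousWithinAt)
    (fun x hx => hasDerivAt_logRatio hα hβ ha (hr.trans hx.1))
  have hs1 : 1 < s := hr.trans hs.1
  have hneg : (logRatio α β a p - logRatio α β a r) / (p - r) < 0 :=
    div_neg_of_neg_of_pos (by linarith) (by linarith)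
  rw [← hs'] at hneg
  have hden : 0 < (s - 1) * s * ((s + a - 1) * (s + a)) := by
    have h1 : 0 < s - 1 := by linarith
    have h2 : 0 < s := by linarith
    have h3 : 0 < s + a - 1 := by linarith
    positivity
  have hN : shiftQuad α β a (s - 1) < 0 := by
    by_contra! h
    exact absurd hneg (not_lt.2 (div_nonneg h hden.le))
  exact lt_of_le_of_lt (logRatio_antitone hα hαβ ha hs1 hN hs.2.le hpq.le) h2

/-- Without a shift the likelihood ratio is decreasing, so `f₁ - f₂` stays negative once negative. -/
lemma pdf_lt_of_lt {α β p q : ℝ} (hα : 0 < α) (hαβ : α < β) (hp : 1 < p) (hpq : p < q)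
    (h : alphaHatPDF α p < alphaHatPDF β (p + 0)) : alphaHatPDF α q < alphaHatPDF β (q + 0) := by
  have hβ : 0 < β := hα.trans hαβ
  rw [← logRatio_neg_iff hα hβ le_rfl hp] at h
  rw [← logRatio_neg_iff hα hβ le_rfl (hp.trans hpq)]
  have hN : shiftQuad α β 0 (p - 1) < 0 := by
    have h1 : 0 < p - 1 := by linarith
    have h2 : shiftQuad α β 0 (p - 1) = -((β - α) * ((p - 1) ^ 2 + (p - 1))) := by
      unfold shiftQuad
      ring
    rw [h2]
    have h3 : 0 < β - α := by linarith
    have : 0 < (β - α) * ((p - 1) ^ 2 + (p - 1)) := by positivity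
    linarith
  exact lt_of_le_of_lt (logRatio_antitone hα hαβ le_rfl hp hN le_rfl hpq.le) h

/-! ### Sign changes of the shifted difference of distribution functions -/

/-- The difference `F₁(x) - F₂(x + a)`. -/
noncomputable def shiftDiff (α β a x : ℝ) : ℝ := alphaHatCDF α x - alphaHatCDF β (x + a)

lemma exists_slope {α β a x y : ℝ} (hα : 0 < α) (hβ : 0 < β) (ha : 0 ≤ a) (hx : 1 ≤ x)
    (hxy : x < y) : ∃ c ∈ Ioo x y, alphaHatPDF α c - alphaHatPDF β (c + a) =
      (shiftDiff α β a y - shiftDiff α β a x) / (y - x) := by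
  refine exists_hasDerivAt_eq_slope (shiftDiff α β a)
    (fun c => alphaHatPDF α c - alphaHatPDF β (c + a)) hxy ?_ fun c hc => ?_
  · exact ((continuous_cdf hα).sub
      ((continuous_cdf hβ).comp (continuous_id.add continuous_const))).continuousOn
  · have hc1 : 1 < c := lt_of_le_of_lt hx hc.1
    exact (hasDerivAt_cdf hα hc1).sub
      ((hasDerivAt_cdf hβ (by linarith : 1 < c + a)).comp_add_const c a)

lemma exists_pdf_lt {α β a x y : ℝ} (hα : 0 < α) (hβ : 0 < β) (ha : 0 ≤ a) (hx : 1 ≤ x)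
    (hxy : x < y) (h : shiftDiff α β a y < shiftDiff α β a x) :
    ∃ c ∈ Ioo x y, alphaHatPDF α c < alphaHatPDF β (c + a) := by
  obtain ⟨c, hc, e⟩ := exists_slope hα hβ ha hx hxy
  refine ⟨c, hc, ?_⟩
  have := div_neg_of_neg_of_pos (sub_neg.2 h) (sub_pos.2 hxy)
  linarith

lemma exists_lt_pdf {α β a x y : ℝ} (hα : 0 < α) (hβ : 0 < β) (ha : 0 ≤ a) (hx : 1 ≤ x)
    (hxy : x < y) (h : shiftDiff α β a x < shiftDiff α β a y) :
    ∃ c ∈ Ioo x y, alphaHatPDF β (c + a) < alphaHatPDF α c := by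
  obtain ⟨c, hc, e⟩ := exists_slope hα hβ ha hx hxy
  refine ⟨c, hc, ?_⟩
  have := div_pos (sub_pos.2 h) (sub_pos.2 hxy)
  linarith

/-- Since the difference vanishes at infinity, it must increase after a negative value. -/
lemma exists_lt_pdf_of_neg {α β a x : ℝ} (hα : 0 < α) (hβ : 0 < β) (ha : 0 ≤ a) (hx : 1 ≤ x)
    (h : shiftDiff α β a x < 0) : ∃ c, x < c ∧ alphaHatPDF β (c + a) < alphaHatPDF α c := by
  have ht : Tendsto (shiftDiff α β a) atTop (𝓝 0) := by
    have := (tendsto_cdf hα).sub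
      ((tendsto_cdf hβ).comp (tendsto_atTop_add_const_right atTop a tendsto_id))
    rw [sub_self] at this
    exact this
  obtain ⟨y, hxy, hy⟩ := ((eventually_gt_atTop x).and (ht.eventually_const_lt h)).exists
  obtain ⟨c, hc, hc'⟩ := exists_lt_pdf hα hβ ha hx hxy hy
  exact ⟨c, hc.1, hc'⟩

/-- The usual stochastic order. -/
lemma cdf_le {α β : ℝ} (hα : 0 < α) (hαβ : α < β) (x : ℝ) : alphaHatCDF β x ≤ alphaHatCDF α x := by
  have hβ : 0 < β := hα.trans hαβ
  rcases le_or_gt x 1 with hx | hx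
  · rw [cdf_of_le_one α hx, cdf_of_le_one β hx]
  by_contra! h
  have h1 : shiftDiff α β 0 1 = 0 := by
    simp [shiftDiff, cdf_of_le_one]
  have h2 : shiftDiff α β 0 x < 0 := by
    rw [shiftDiff, add_zero]
    linarith
  obtain ⟨p, hp, hp'⟩ := exists_pdf_lt hα hβ le_rfl le_rfl hx (by rw [h1]; exact h2)
  obtain ⟨q, hq, hq'⟩ := exists_lt_pdf_of_neg hα hβ le_rfl hx.le h2
  exact lt_asymm hq' (pdf_lt_of_lt hα hαβ hp.1 (hp.2.trans hq) hp')

/-- The difference `F₁(x) - F₂(x + a)` does not become negative after a zero. -/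
lemma shiftDiff_nonneg {α β a x y : ℝ} (hα : 0 < α) (hαβ : α < β) (ha : 0 ≤ a) (hx : 1 < x)
    (hxy : x ≤ y) (h0 : shiftDiff α β a x = 0) : 0 ≤ shiftDiff α β a y := by
  have hβ : 0 < β := hα.trans hαβ
  by_contra! h
  have hlt : x < y := lt_of_le_of_ne hxy (by rintro rfl; linarith)
  obtain ⟨p, hp, hp'⟩ := exists_pdf_lt hα hβ ha hx.le hlt (by rw [h0]; exact h)
  obtain ⟨q, hq, hq'⟩ := exists_lt_pdf_of_neg hα hβ ha (hx.le.trans hxy) h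
  have hpq : p < q := hp.2.trans hq
  rcases ha.eq_or_lt with rfl | ha'
  · exact lt_asymm hq' (pdf_lt_of_lt hα hαβ (hx.trans hp.1) hpq hp')
  · have h1 : shiftDiff α β a 1 < 0 := by
      have := strictMonoOn_cdf hβ (mem_Ici.2 le_rfl) (mem_Ici.2 (by linarith : 1 ≤ 1 + a))
        (by linarith)
      rw [cdf_of_le_one β le_rfl] at this
      rw [shiftDiff, cdf_of_le_one α le_rfl]
      linarith
    obtain ⟨r, hr, hr'⟩ := exists_lt_pdf hα hβ ha le_rfl hx (by rw [h0]; exact h1)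
    exact lt_asymm hq' (pdf_shift_lt_of_lt hα hαβ ha hr.1 (hr.2.trans hp.1) hpq hr' hp')

end MomentEstimator

/-- For `n = 2`, the moment estimator `α̂` is dispersively increasing in
the shape parameter `α`: for `0 < α₁ < α₂` the distribution of `α̂` under shape `α₁` is
dispersively smaller than under shape `α₂`. -/
theorem momentEstimator_dispersively_increasing
    (α₁ α₂ : ℝ) (hα₁ : 0 < α₁) (hα : α₁ < α₂) :
    ∀ u v : ℝ, 0 < u → u ≤ v → v < 1 →
      alphaHatQuantile α₁ v - alphaHatQuantile α₁ u ≤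
        alphaHatQuantile α₂ v - alphaHatQuantile α₂ u := by
  intro u v hu huv hv
  have hα₂ : 0 < α₂ := hα₁.trans hα
  obtain ⟨hx1, hxu, hxl⟩ := MomentEstimator.quantile_spec hα₁ hu (huv.trans_lt hv)
  obtain ⟨-, -, hvl⟩ := MomentEstimator.quantile_spec hα₁ (hu.trans_le huv) hv
  obtain ⟨-, hyu, hyl⟩ := MomentEstimator.quantile_spec hα₂ hu (huv.trans_lt hv)
  obtain ⟨-, hyv, -⟩ := MomentEstimator.quantile_spec hα₂ (hu.trans_le huv) hv
  set x := alphaHatQuantile α₁ u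
  set y := alphaHatQuantile α₂ u
  set z := alphaHatQuantile α₂ v
  have ha : 0 ≤ y - x :=
    sub_nonneg.2 (hxl y (by rw [← hyu]; exact MomentEstimator.cdf_le hα₁ hα y))
  have hyz : y ≤ z := hyl z (by rw [hyv]; exact huv)
  have h := MomentEstimator.shiftDiff_nonneg (y := z - (y - x)) hα₁ hα ha hx1 (by linarith)
    (by rw [MomentEstimator.shiftDiff, add_sub_cancel, hxu, hyu, sub_self])
  rw [MomentEstimator.shiftDiff, sub_add_cancel, hyv] at h
  have := hvl (z - (y - x)) (by linarith)
  linarith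
end

section
/- Let F(t) = 1 − 2π/(3√3 t²) for t ≥ √2 and F(t) = 1 − √(2−t²)/(√3 t) + π/(3√3 t²) − 2 arcsin(t/√2)/(√3 t²) for √2/2 ≤ t ≤ √2, and let G(t) = 1 − 10π(4t² − 3)/(27√3 t⁴) for t ≥ √2 and G(t) = 1 + [√(2−t²)(−33t⁴ − 13t² + 8) + 5πt(4t² − 3) − 30t(4t² − 3) arcsin(t/√2)]/(27√3 t⁵) for √2/2 ≤ t ≤ √2 (these are the CDFs of the statistic T = X̄/S for samples of size 3 from the exponential distribution and from the gamma distribution with shape 2, respectively). Then the function x ↦ G⁻¹(F(x))/x is not monotone on (√2/2, ∞): with x₁ = 11/10 < x₂ = √6/2 < x₃ = √2, one has G⁻¹(F(x₁))/x₁ > G⁻¹(F(x₂))/x₂ and G⁻¹(F(x₃))/x₃ > G⁻¹(F(x₂))/x₂, where G⁻¹ denotes the (generalized) inverse of G. -/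
/-!
All three quantiles exceed `√2`, so only the elementary branch of `G = gammaTwoTCDF` on `[√2, ∞)` is
inverted; the ratios are then separated by comparing `G (r x)` with `F x` for a rational `r`
(`r = 1.318` above the ratio at `√6/2`, `r = 1.319` below the other two).

An upper bound for a quantile only needs one point of the superlevel set. A lower bound needs
`G x < u` for *every* `x < a`, including those with `x < √2`, where `G` involves an arcsine.
There substitute `t = √2 sin θ` and write `G = 1 - K θ / (108 √3)` with `K = gammaTail`. With `ψ = θ - π/6`,
the derivative of `K` collapses to `40 (cos θ / sin⁶ θ) (3ψ cos 3ψ - sin 3ψ)`, which is nonpositive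
by `x ≤ tan x` on `[0, π/2)` (and by signs for `3ψ ≥ π/2`). Hence `K` is antitone on `[π/6, π/2]` and `G ≤ G (√2)` to the left of `√2`.
-/

open MeasureTheory Real

/-- The cumulative distribution function of `T = X̄/S` for a sample of size `3` from the
exponential distribution with density `e^{-x}`. -/
noncomputable def expTCDF (t : ℝ) : ℝ :=
  if Real.sqrt 2 ≤ t then 1 - 2 * π / (3 * Real.sqrt 3 * t ^ 2)
  else if Real.sqrt 2 / 2 ≤ t then
    -(Real.sqrt (2 - t ^ 2) / (Real.sqrt 3 * t)) + π / (3 * Real.sqrt 3 * t ^ 2) -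
      2 * Real.arcsin (t / Real.sqrt 2) / (Real.sqrt 3 * t ^ 2) + 1
  else 0

/-- The cumulative distribution function of `T = X̄/S` for a sample of size `3` from the
gamma distribution with density `x e^{-x}` (shape `2`, scale `1`). -/
noncomputable def gammaTwoTCDF (t : ℝ) : ℝ :=
  if Real.sqrt 2 ≤ t then 1 - 10 * π * (4 * t ^ 2 - 3) / (27 * Real.sqrt 3 * t ^ 4)
  else if Real.sqrt 2 / 2 ≤ t then
    (Real.sqrt (2 - t ^ 2) * (-33 * t ^ 4 - 13 * t ^ 2 + 8) +
        5 * π * t * (4 * t ^ 2 - 3) -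
        30 * t * (4 * t ^ 2 - 3) * Real.arcsin (t / Real.sqrt 2)) /
      (27 * Real.sqrt 3 * t ^ 5) + 1
  else 0

/-- The left-continuous quantile (generalized inverse) of `gammaTwoTCDF`. -/
noncomputable def gammaTwoTQuantile (u : ℝ) : ℝ :=
  sInf {x : ℝ | u ≤ gammaTwoTCDF x}

/-- The rescaled tail of `gammaTwoTCDF` on its middle branch, in the variable `t = √2 sin θ`:
`gammaTwoTCDF t = 1 - gammaTail θ / (108 √3)`. -/
noncomputable def gammaTail (θ : ℝ) : ℝ :=
  (cos θ * (132 * sin θ ^ 4 + 26 * sin θ ^ 2 - 8) +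
    sin θ * (8 * sin θ ^ 2 - 3) * (30 * θ - 5 * π)) / sin θ ^ 5

lemma mul_cos_le_sin {x : ℝ} (h0 : 0 ≤ x) (h1 : x ≤ π) : x * cos x ≤ sin x := by
  rcases lt_or_ge x (π / 2) with h | h
  · have hc : 0 < cos x := cos_pos_of_mem_Ioo ⟨by linarith [pi_pos], h⟩
    have := Real.le_tan h0 h
    rwa [tan_eq_sin_div_cos, le_div_iff₀ hc] at this
  · have hc : cos x ≤ 0 := cos_nonpos_of_pi_div_two_le_of_le h (by linarith [pi_pos])
    have hs : 0 ≤ sin x := sin_nonneg_of_nonneg_of_le_pi h0 h1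
    nlinarith

lemma hasDerivAt_gammaTail {θ : ℝ} (hs : sin θ ≠ 0) :
    HasDerivAt gammaTail
      (40 * cos θ / sin θ ^ 6 *
        (3 * (θ - π / 6) * cos (3 * (θ - π / 6)) - sin (3 * (θ - π / 6)))) θ := by
  have hS := hasDerivAt_sin θ
  have hC := hasDerivAt_cos θ
  have h := ((hC.mul ((((hS.pow 4).const_mul 132).add ((hS.pow 2).const_mul 26)).sub_const 8)).add
    ((hS.mul (((hS.pow 2).const_mul 8).sub_const 3)).mul
      (((hasDerivAt_id θ).const_mul 30).sub_const (5 * π)))).div (hS.pow 5) (pow_ne_zero 5 hs)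
  have e : 3 * (θ - π / 6) = 3 * θ - π / 2 := by ring
  have h3 : cos (3 * (θ - π / 6)) = 3 * sin θ - 4 * sin θ ^ 3 := by
    rw [e, cos_sub_pi_div_two, sin_three_mul]
  have h4 : sin (3 * (θ - π / 6)) = -(4 * cos θ ^ 3 - 3 * cos θ) := by
    rw [e, sin_sub_pi_div_two, cos_three_mul]
  rw [h3, h4]
  refine h.congr_deriv ?_
  simp only [Pi.mul_apply, Pi.add_apply, Pi.pow_apply, id]
  have hcc : cos θ ^ 2 = 1 - sin θ ^ 2 := by rw [cos_sq']
  generalize sin θ = s at *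
  generalize cos θ = c at *
  have hc3 : c ^ 3 = c * (1 - s ^ 2) := by rw [← hcc]; ring
  rw [hc3]
  field_simp
  push_cast
  grind

lemma antitoneOn_gammaTail : AntitoneOn gammaTail (Set.Icc (π / 6) (π / 2)) := by
  have hpos : ∀ θ ∈ Set.Icc (π / 6) (π / 2), 0 < sin θ := fun θ h =>
    sin_pos_of_pos_of_lt_pi (by linarith [h.1, pi_pos]) (by linarith [h.2, pi_pos])
  refine antitoneOn_of_deriv_nonpos (convex_Icc _ _)
    (fun θ h => (hasDerivAt_gammaTail (hpos θ h).ne').continuousAt.continuousWithinAt)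
    (fun θ h => (hasDerivAt_gammaTail
      (hpos θ (interior_subset h)).ne').differentiableAt.differentiableWithinAt) ?_
  intro θ h
  have h' := interior_subset h
  rw [(hasDerivAt_gammaTail (hpos θ h').ne').deriv]
  have hs := hpos θ h'
  have hc : 0 ≤ cos θ := cos_nonneg_of_mem_Icc ⟨by linarith [h'.1, pi_pos], h'.2⟩
  have key := mul_cos_le_sin (x := 3 * (θ - π / 6)) (by linarith [h'.1]) (by linarith [h'.2])
  exact mul_nonpos_of_nonneg_of_nonpos (by positivity) (by linarith)

lemma fifty_pi_le_gammaTail {θ : ℝ} (h : θ ∈ Set.Icc (π / 6) (π / 2)) :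
    50 * π ≤ gammaTail θ := by
  have h1 := antitoneOn_gammaTail h ⟨by linarith [pi_pos], le_refl (π / 2)⟩ h.2
  have h2 : gammaTail (π / 2) = 50 * π := by
    simp only [gammaTail, sin_pi_div_two, cos_pi_div_two]; ring
  linarith

lemma gammaTwoTCDF_of_ge {t : ℝ} (h : √2 ≤ t) :
    gammaTwoTCDF t = 1 - 10 * π * (4 * t ^ 2 - 3) / (27 * √3 * t ^ 4) := by
  rw [gammaTwoTCDF, if_pos h]

lemma gammaTwoTCDF_mid {θ : ℝ} (h : θ ∈ Set.Ico (π / 6) (π / 2)) :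
    gammaTwoTCDF (√2 * sin θ) = 1 - gammaTail θ / (108 * √3) := by
  have h2 : (0 : ℝ) < √2 := by positivity
  have h3 : (0 : ℝ) < √3 := by positivity
  have hsq : √2 ^ 2 = (2 : ℝ) := Real.sq_sqrt (by norm_num)
  have hθ : arcsin (sin θ) = θ := arcsin_sin (by linarith [h.1, pi_pos]) h.2.le
  have hlt : sin θ < 1 := by
    rw [← sin_pi_div_two]
    exact sin_lt_sin_of_lt_of_le_pi_div_two (by linarith [h.1, pi_pos]) le_rfl h.2
  have hge : 1 / 2 ≤ sin θ := by
    rw [← sin_pi_div_six]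
    exact sin_le_sin_of_le_of_le_pi_div_two (by linarith [pi_pos]) h.2.le h.1
  have hc : 0 ≤ cos θ := cos_nonneg_of_mem_Icc ⟨by linarith [h.1, pi_pos], h.2.le⟩
  have hroot : √(2 - (√2 * sin θ) ^ 2) = √2 * cos θ := by
    rw [show 2 - (√2 * sin θ) ^ 2 = (√2 * cos θ) ^ 2 by
      rw [mul_pow, mul_pow, hsq, cos_sq']; ring]
    exact Real.sqrt_sq (by positivity)
  rw [gammaTwoTCDF, if_neg (by nlinarith), if_pos (by nlinarith), hroot,
    mul_div_cancel_left₀ _ h2.ne', hθ, gammaTail]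
  have hs : sin θ ≠ 0 := by linarith
  have h4 : √2 ^ 4 = (4 : ℝ) := by rw [show √2 ^ 4 = (√2 ^ 2) ^ 2 by ring, hsq]; norm_num
  have h5 : √2 ^ 5 = 4 * √2 := by rw [show √2 ^ 5 = √2 ^ 4 * √2 by ring, h4]
  simp only [mul_pow, hsq, h4, h5]
  field_simp
  ring

/-- On `[√2, ∞)` the tail is a multiple of `(4 S - 3) / S ^ 2` with `S = t ^ 2 ≥ 2`, which decreases
in `S`. -/
lemma gammaTwoTCDF_mono {s t : ℝ} (hs : √2 ≤ s) (hst : s ≤ t) :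
    gammaTwoTCDF s ≤ gammaTwoTCDF t := by
  have h2 : (0 : ℝ) < √2 := by positivity
  have hS : 2 ≤ s ^ 2 := by
    rw [← Real.sq_sqrt (show (0 : ℝ) ≤ 2 by norm_num)]; gcongr
  have hST : s ^ 2 ≤ t ^ 2 := by
    have : 0 < s := h2.trans_le hs
    gcongr
  rw [gammaTwoTCDF_of_ge hs, gammaTwoTCDF_of_ge (hs.trans hst)]
  have key : (4 * t ^ 2 - 3) / t ^ 4 ≤ (4 * s ^ 2 - 3) / s ^ 4 := by
    rw [show t ^ 4 = (t ^ 2) ^ 2 by ring, show s ^ 4 = (s ^ 2) ^ 2 by ring]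
    generalize s ^ 2 = S at *
    generalize t ^ 2 = U at *
    rw [div_le_div_iff₀ (by nlinarith) (by nlinarith)]
    have : 0 ≤ 4 * S * U - 3 * S - 3 * U := by nlinarith
    nlinarith [mul_nonneg (sub_nonneg.2 hST) this]
  have e : ∀ r : ℝ, 10 * π * (4 * r ^ 2 - 3) / (27 * √3 * r ^ 4) =
      10 * π / (27 * √3) * ((4 * r ^ 2 - 3) / r ^ 4) := fun r => by
    rw [div_mul_div_comm]
  rw [e, e]
  gcongr

lemma gammaTwoTCDF_sqrt_two : gammaTwoTCDF √2 = 1 - 50 * π / (108 * √3) := by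
  rw [gammaTwoTCDF_of_ge le_rfl, show √2 ^ 4 = (√2 ^ 2) ^ 2 by ring,
    Real.sq_sqrt (show (0 : ℝ) ≤ 2 by norm_num)]
  field_simp
  ring

lemma gammaTwoTCDF_sqrt_two_nonneg : 0 ≤ gammaTwoTCDF √2 := by
  rw [gammaTwoTCDF_sqrt_two, sub_nonneg, div_le_one (by positivity)]
  have : (1.73 : ℝ) ≤ √3 := Real.le_sqrt_of_sq_le (by norm_num)
  linarith [pi_lt_d2]

lemma gammaTwoTCDF_le_of_lt {t : ℝ} (h : t < √2) : gammaTwoTCDF t ≤ gammaTwoTCDF √2 := by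
  have h2 : (0 : ℝ) < √2 := by positivity
  rcases lt_or_ge t (√2 / 2) with ht | ht
  · rw [gammaTwoTCDF, if_neg h.not_ge, if_neg ht.not_ge]
    exact gammaTwoTCDF_sqrt_two_nonneg
  · have hlt : t / √2 < 1 := by rwa [div_lt_one h2]
    have hge : 1 / 2 ≤ t / √2 := by rw [le_div_iff₀ h2]; linarith
    have hmem : arcsin (t / √2) ∈ Set.Ico (π / 6) (π / 2) := by
      refine ⟨?_, arcsin_lt_pi_div_two.2 hlt⟩
      rw [le_arcsin_iff_sin_le ⟨by linarith [pi_pos], by linarith [pi_pos]⟩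
        ⟨by linarith, hlt.le⟩, sin_pi_div_six]
      exact hge
    have hsin : √2 * sin (arcsin (t / √2)) = t := by
      rw [sin_arcsin (by linarith) hlt.le]; field_simp
    have := gammaTwoTCDF_mid hmem
    rw [hsin] at this
    rw [this, gammaTwoTCDF_sqrt_two]
    have := fifty_pi_le_gammaTail ⟨hmem.1, hmem.2.le⟩
    gcongr

lemma le_of_gammaTwoTCDF_lt {u a x : ℝ} (ha : √2 ≤ a) (h : gammaTwoTCDF a < u)
    (hx : u ≤ gammaTwoTCDF x) : a ≤ x := by
  by_contra! hlt
  rcases lt_or_ge x √2 with hx2 | hx2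
  · linarith [gammaTwoTCDF_le_of_lt hx2, gammaTwoTCDF_mono le_rfl ha]
  · linarith [gammaTwoTCDF_mono hx2 hlt.le]

/-- The witness `b` ensures that the superlevel set is nonempty, so that its `sInf` is genuine. -/
lemma le_gammaTwoTQuantile {u a b : ℝ} (ha : √2 ≤ a) (h : gammaTwoTCDF a < u)
    (hb : u ≤ gammaTwoTCDF b) : a ≤ gammaTwoTQuantile u :=
  le_csInf ⟨b, hb⟩ fun _ hx => le_of_gammaTwoTCDF_lt ha h hx

/-- Positivity of `u` bounds the superlevel set below by `√2 / 2`, so that its `sInf` is genuine. -/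
lemma gammaTwoTQuantile_le {u b : ℝ} (hu : 0 < u) (hb : u ≤ gammaTwoTCDF b) :
    gammaTwoTQuantile u ≤ b := by
  refine csInf_le ⟨√2 / 2, fun x hx => ?_⟩ hb
  by_contra! hlt
  have h2 : (0 : ℝ) < √2 := by positivity
  have hx' : u ≤ gammaTwoTCDF x := hx
  rw [gammaTwoTCDF, if_neg (by linarith), if_neg hlt.not_ge] at hx'
  linarith

lemma sqrt_two_bounds : 1.414 < √2 ∧ √2 < 1.4143 :=
  ⟨Real.lt_sqrt_of_sq_lt (by norm_num), (Real.sqrt_lt' (by norm_num)).2 (by norm_num)⟩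

lemma sqrt_three_gt : 1.732 < √3 := Real.lt_sqrt_of_sq_lt (by norm_num)

lemma sqrt_six_eq : √6 = √2 * √3 := by
  rw [← Real.sqrt_mul (by norm_num)]; norm_num

lemma expTCDF_sqrt_six_div_two : expTCDF (√6 / 2) = 2 / 3 - 2 * π / (9 * √3) := by
  have h2 : (0 : ℝ) < √2 := by positivity
  have h3 : (0 : ℝ) < √3 := by positivity
  have q2 : √2 ^ 2 = (2 : ℝ) := Real.sq_sqrt (by norm_num)
  have q3 : √3 ^ 2 = (3 : ℝ) := Real.sq_sqrt (by norm_num)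
  have hx : (√6 / 2) ^ 2 = 3 / 2 := by
    rw [div_pow, Real.sq_sqrt (by norm_num)]; norm_num
  have hlt : √3 < 2 := (Real.sqrt_lt' (by norm_num)).2 (by norm_num)
  have hroot : √(2 - (3 / 2 : ℝ)) = √2 / 2 := by
    rw [show (2 - 3 / 2 : ℝ) = (√2 / 2) ^ 2 by rw [div_pow, q2]; norm_num]
    exact Real.sqrt_sq (by positivity)
  have harc : arcsin (√6 / 2 / √2) = π / 3 := by
    rw [show √6 / 2 / √2 = sin (π / 3) by rw [sin_pi_div_three, sqrt_six_eq]; field_simp]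
    exact arcsin_sin (by linarith [pi_pos]) (by linarith [pi_pos])
  rw [expTCDF, if_neg (by rw [sqrt_six_eq]; nlinarith),
    if_pos (by rw [sqrt_six_eq]; nlinarith [sqrt_three_gt]), hx, hroot, harc, sqrt_six_eq]
  field_simp
  grind

lemma expTCDF_sqrt_two : expTCDF √2 = 1 - π / (3 * √3) := by
  rw [expTCDF, if_pos le_rfl, Real.sq_sqrt (by norm_num)]
  field_simp

lemma quantile_sqrt_six :
    gammaTwoTQuantile (expTCDF (√6 / 2)) / (√6 / 2) ≤ 1.318 := by
  have h3 := sqrt_three_gt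
  have hx : √6 ^ 2 = (6 : ℝ) := Real.sq_sqrt (by norm_num)
  have h6 : 2.4 < √6 := Real.lt_sqrt_of_sq_lt (by norm_num)
  rw [div_le_iff₀ (by positivity)]
  apply gammaTwoTQuantile_le
  · rw [expTCDF_sqrt_six_div_two, sub_pos, div_lt_div_iff₀ (by positivity) (by norm_num)]
    linarith [pi_lt_d2]
  · rw [gammaTwoTCDF_of_ge (by linarith [sqrt_two_bounds.2]), expTCDF_sqrt_six_div_two,
      show (1.318 * (√6 / 2)) ^ 4 = (1.318 ^ 2 / 4 * √6 ^ 2) ^ 2 by ring,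
      show (1.318 * (√6 / 2)) ^ 2 = 1.318 ^ 2 / 4 * √6 ^ 2 by ring, hx]
    have h0 : 0 < √3 := by positivity
    rw [← sub_nonneg]
    field_simp
    norm_num
    nlinarith [pi_lt_d4]

lemma quantile_sqrt_two :
    1.319 ≤ gammaTwoTQuantile (expTCDF √2) / √2 := by
  have h3 := sqrt_three_gt
  have h0 : 0 < √3 := by positivity
  have q2 : √2 ^ 2 = (2 : ℝ) := Real.sq_sqrt (by norm_num)
  have h2 := sqrt_two_bounds.1
  rw [le_div_iff₀ (by positivity)]
  refine le_gammaTwoTQuantile (b := 10) (by linarith) ?_ ?_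
  · rw [gammaTwoTCDF_of_ge (by linarith), expTCDF_sqrt_two,
      show (1.319 * √2) ^ 4 = (1.319 ^ 2 * √2 ^ 2) ^ 2 by ring,
      show (1.319 * √2) ^ 2 = 1.319 ^ 2 * √2 ^ 2 by ring, q2, ← sub_pos]
    have := pi_pos
    field_simp
    norm_num
    linarith
  · rw [gammaTwoTCDF_of_ge (by linarith [sqrt_two_bounds.2]), expTCDF_sqrt_two, ← sub_nonneg]
    have := pi_pos
    field_simp
    norm_num
    linarith

/-- Writing the angle as `π/4 + δ` turns the claim into `1.1 ≤ sin δ + cos δ`, which at `δ = 0.106`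
follows from Taylor bounds. -/
lemma arcsin_le_bound : arcsin (11 / 10 / √2) ≤ π / 4 + 0.106 := by
  have h2 : (0 : ℝ) < √2 := by positivity
  have q2 : √2 * √2 = (2 : ℝ) := Real.mul_self_sqrt (by norm_num)
  rw [arcsin_le_iff_le_sin' ⟨by linarith [pi_pos], by linarith [pi_gt_d2]⟩, sin_add,
    sin_pi_div_four, cos_pi_div_four, div_le_iff₀ h2]
  have hs : (0.106 : ℝ) - 0.106 ^ 3 / 6 < sin 0.106 := sin_gt_sub_cube (by norm_num)
  have hc : 1 - (0.106 : ℝ) ^ 2 / 2 ≤ cos 0.106 := one_sub_sq_div_two_le_cos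
  have e : (√2 / 2 * cos 0.106 + √2 / 2 * sin 0.106) * √2 = cos 0.106 + sin 0.106 := by
    linear_combination (cos 0.106 + sin 0.106) / 2 * q2
  rw [e]
  norm_num at hs hc ⊢
  linarith

lemma quantile_eleven_tenths :
    1.319 ≤ gammaTwoTQuantile (expTCDF (11 / 10)) / (11 / 10) := by
  have h0 : 0 < √3 := by positivity
  obtain ⟨h2, h2'⟩ := sqrt_two_bounds
  have hF : expTCDF (11 / 10) = 1 - (√(2 - (11 / 10 : ℝ) ^ 2) / (11 / 10) -
      π / (3 * (11 / 10) ^ 2) + 2 * arcsin (11 / 10 / √2) / (11 / 10) ^ 2) / √3 := by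
    rw [expTCDF, if_neg (by linarith), if_pos (by linarith)]
    field_simp
    ring
  have hG : ∀ t, √2 ≤ t →
      gammaTwoTCDF t = 1 - 10 * π * (4 * t ^ 2 - 3) / (27 * t ^ 4) / √3 := fun t ht => by
    rw [gammaTwoTCDF_of_ge ht, div_div]
    ring_nf
  have hr : √(2 - (11 / 10 : ℝ) ^ 2) < 0.889 := (Real.sqrt_lt' (by norm_num)).2 (by norm_num)
  have hr' : 0.88 < √(2 - (11 / 10 : ℝ) ^ 2) := Real.lt_sqrt_of_sq_lt (by norm_num)
  have harc := arcsin_le_bound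
  have harc' : π / 6 ≤ arcsin (11 / 10 / √2) := by
    have ht : 11 / 10 / √2 ≤ 1 := by rw [div_le_one (by positivity)]; linarith
    have ht' : 1 / 2 ≤ 11 / 10 / √2 := by rw [le_div_iff₀ (by positivity)]; linarith
    rw [le_arcsin_iff_sin_le ⟨by linarith [pi_pos], by linarith [pi_pos]⟩
      ⟨by linarith, ht⟩, sin_pi_div_six]
    exact ht'
  have hp := pi_gt_d4
  have hp' := pi_lt_d4
  rw [le_div_iff₀ (by norm_num)]
  refine le_gammaTwoTQuantile (b := 10) (by linarith) ?_ ?_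
  · rw [hG _ (by linarith), hF]
    refine sub_lt_sub_left ((div_lt_div_iff_of_pos_right h0).2 ?_) 1
    norm_num at *
    linarith
  · rw [hG _ (by linarith), hF]
    refine sub_le_sub_left ((div_le_div_iff_of_pos_right h0).2 ?_) 1
    norm_num at *
    linarith

/-- The function `x ↦ G⁻¹(F(x))/x` (with `F = expTCDF`,
`G = gammaTwoTCDF`) is not monotone on `(√2/2, ∞)`: its value at `x₂ = √6/2` is strictly
smaller than its values at `x₁ = 11/10 < x₂` and at `x₃ = √2 > x₂`. -/
theorem star_ratio_not_monotone :
    (¬ MonotoneOn (fun x => gammaTwoTQuantile (expTCDF x) / x) (Set.Ioi (Real.sqrt 2 / 2)) ∧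
      ¬ AntitoneOn (fun x => gammaTwoTQuantile (expTCDF x) / x) (Set.Ioi (Real.sqrt 2 / 2))) ∧
    gammaTwoTQuantile (expTCDF (Real.sqrt 6 / 2)) / (Real.sqrt 6 / 2) <
      gammaTwoTQuantile (expTCDF (11 / 10)) / (11 / 10) ∧
    gammaTwoTQuantile (expTCDF (Real.sqrt 6 / 2)) / (Real.sqrt 6 / 2) <
      gammaTwoTQuantile (expTCDF (Real.sqrt 2)) / Real.sqrt 2 := by
  have h1 := quantile_eleven_tenths
  have h2 := quantile_sqrt_six
  have h3 := quantile_sqrt_two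
  have b2 := sqrt_two_bounds
  have l6 : 2.4 < √6 := Real.lt_sqrt_of_sq_lt (by norm_num)
  have u6 : √6 < 2.46 := (Real.sqrt_lt' (by norm_num)).2 (by norm_num)
  have h12 : gammaTwoTQuantile (expTCDF (√6 / 2)) / (√6 / 2) <
      gammaTwoTQuantile (expTCDF (11 / 10)) / (11 / 10) :=
    (h2.trans_lt (by norm_num)).trans_le h1
  have h32 : gammaTwoTQuantile (expTCDF (√6 / 2)) / (√6 / 2) <
      gammaTwoTQuantile (expTCDF √2) / √2 :=
    (h2.trans_lt (by norm_num)).trans_le h3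
  refine ⟨⟨fun h => ?_, fun h => ?_⟩, h12, h32⟩
  · exact (h (a := 11 / 10) (b := √6 / 2) (Set.mem_Ioi.2 (by linarith))
      (Set.mem_Ioi.2 (by linarith)) (by linarith)).not_gt h12
  · exact (h (a := √6 / 2) (b := √2) (Set.mem_Ioi.2 (by linarith))
      (Set.mem_Ioi.2 (by linarith)) (by linarith)).not_gt h32
end

section
/- For sample size n = 2, the moment estimator α̂ is increasing in the shape parameter α with respect to the star order: for any 0 < α₁ < α₂, if α̂₁ has density f^{α₁}(x) = (1/B(1/2,α₁)) x^{−3/2}(1 − 1/x)^{α₁−1} on (1,∞) and α̂₂ has density f^{α₂}(x) = (1/B(1/2,α₂)) x^{−3/2}(1 − 1/x)^{α₂−1} on (1,∞), then α̂₁ ≤_* α̂₂; that is, with F and G the corresponding CDFs, the function x ↦ G⁻¹(F(x))/x is increasing on (1,∞). -/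
/-!
Write `F`, `G` for the distribution functions with shapes `α₁ < α₂` and `φ = G⁻¹ ∘ F`. Monotonicity
of `φ(x)/x` amounts to the following crossing property for every slope `c = φ(x)/x`: once
`D(x) = F(x) - G(cx)` is nonnegative at some `x > 1`, it stays nonnegative to the right of `x`
(`cdf_crossing`).

The density of `D` at `t > 1` is `f(t) - c g(ct)`, and up to a constant `log (f(t) / (c g(ct)))` is
`h(s) = (α₁ - 1) log(1 - s) - (α₂ - 1) log(1 - ks)` with `s = 1/t` and `k = 1/c`. For `k ≤ 1` the
sign of `h'` is that of an affine function of `s` with slope `k(α₁ - α₂) < 0`, so `h` increases and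
then decreases (`logRatio_unimodal`). Suppose `c > 1`, `D(x) ≥ 0` and `D(y) < 0` with `1 < x < y`.
Since `D(1) < 0` and `D(∞) = 0`, the density of `D` would be positive somewhere in `(1, x)`,
negative somewhere in `(x, y)` and positive somewhere beyond `y`, contradicting unimodality.

For `c = 1` the function `h` is monotone, which gives `G ≤ F` (`cdf_le_cdf`); therefore `φ(x) ≥ x`
and slopes `c < 1` do not occur. That both densities have total mass `1` follows from the
substitution `x = 1/u`, which turns them into `Beta(1/2, α)` densities.
-/

open MeasureTheory

open Set Filter Topology

namespace AlphaHat

/-! ### The density and its total mass -/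

/-- The normalizing constant `1 / B(1/2, α)`. -/
noncomputable def normConst (α : ℝ) : ℝ :=
  1 / (Real.Gamma (1 / 2) * Real.Gamma α / Real.Gamma (1 / 2 + α))

lemma normConst_pos {α : ℝ} (hα : 0 < α) : 0 < normConst α :=
  one_div_pos.2 (ProbabilityTheory.beta_pos (by norm_num) hα)

lemma pdf_of_one_lt (α : ℝ) {t : ℝ} (ht : 1 < t) :
    alphaHatPDF α t = normConst α * t ^ (-(3 / 2) : ℝ) * (1 - 1 / t) ^ (α - 1) := by
  rw [alphaHatPDF, indicator_of_mem (mem_Ioi.2 ht)]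
  rfl

lemma pdf_of_le_one (α : ℝ) {t : ℝ} (ht : t ≤ 1) : alphaHatPDF α t = 0 := by
  rw [alphaHatPDF, indicator_of_notMem (by simpa using ht)]

lemma pdf_pos {α : ℝ} (hα : 0 < α) {t : ℝ} (ht : 1 < t) : 0 < alphaHatPDF α t := by
  rw [pdf_of_one_lt α ht]
  have h1 : 1 / t < 1 := by rw [div_lt_one (by linarith)]; exact ht
  exact mul_pos (mul_pos (normConst_pos hα) (Real.rpow_pos_of_pos (by linarith) _))
    (Real.rpow_pos_of_pos (by linarith) _)

/-- The substitution `u = 1/x` turns the density of `α̂` into the `Beta(1/2, α)` density. -/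
lemma pdf_eq_betaPDFReal (α : ℝ) {x : ℝ} (hx : 0 < x) :
    (|(-1 : ℝ)| * x ^ ((-1 : ℝ) - 1)) • ProbabilityTheory.betaPDFReal (1 / 2) α (x ^ (-1 : ℝ))
      = alphaHatPDF α x := by
  rw [Real.rpow_neg_one]
  rcases lt_or_ge 1 x with h | h
  · have h1 : 0 < x⁻¹ ∧ x⁻¹ < 1 := ⟨by positivity, inv_lt_one_of_one_lt₀ h⟩
    rw [ProbabilityTheory.betaPDFReal, if_pos h1, pdf_of_one_lt α h, normConst,
      ProbabilityTheory.beta]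
    have h2 : x ^ (-(3 / 2) : ℝ) = x ^ ((-1 : ℝ) - 1) * (x⁻¹) ^ ((1 / 2 : ℝ) - 1) := by
      rw [Real.inv_rpow hx.le, ← Real.rpow_neg hx.le, ← Real.rpow_add hx]
      norm_num
    rw [h2, one_div x]
    simp only [abs_neg, abs_one, one_mul, smul_eq_mul]
    ring
  · have h1 : ¬ (0 < x⁻¹ ∧ x⁻¹ < 1) := fun H => absurd H.2 (not_lt.2 ((one_le_inv₀ hx).2 h))
    rw [ProbabilityTheory.betaPDFReal, if_neg h1, pdf_of_le_one α h, smul_zero]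

lemma betaPDFReal_nonneg {α : ℝ} (hα : 0 < α) (x : ℝ) :
    0 ≤ ProbabilityTheory.betaPDFReal (1 / 2) α x := by
  by_cases h : 0 < x ∧ x < 1
  · exact (ProbabilityTheory.betaPDFReal_pos h.1 h.2 (by norm_num) hα).le
  · rw [ProbabilityTheory.betaPDFReal, if_neg h]

lemma integrable_betaPDFReal {α : ℝ} (hα : 0 < α) :
    Integrable (ProbabilityTheory.betaPDFReal (1 / 2) α) := by
  refine ⟨(ProbabilityTheory.measurable_betaPDFReal _ _).aestronglyMeasurable, ?_⟩
  rw [hasFiniteIntegral_iff_ofReal (ae_of_all _ (betaPDFReal_nonneg hα))]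
  have := ProbabilityTheory.lintegral_betaPDF_eq_one (α := 1 / 2) (β := α) (by norm_num) hα
  simp only [ProbabilityTheory.betaPDF] at this
  rw [this]
  exact ENNReal.one_lt_top

lemma integral_betaPDFReal {α : ℝ} (hα : 0 < α) :
    ∫ x, ProbabilityTheory.betaPDFReal (1 / 2) α x = 1 := by
  have := ProbabilityTheory.lintegral_betaPDF_eq_one (α := 1 / 2) (β := α) (by norm_num) hα
  simp only [ProbabilityTheory.betaPDF] at this
  rw [integral_eq_lintegral_of_nonneg_ae (ae_of_all _ (betaPDFReal_nonneg hα))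
    (ProbabilityTheory.measurable_betaPDFReal _ _).aestronglyMeasurable, this]
  simp

lemma integrable_pdf {α : ℝ} (hα : 0 < α) : Integrable (alphaHatPDF α) := by
  have h1 := (integrableOn_Ioi_comp_rpow_iff (ProbabilityTheory.betaPDFReal (1 / 2) α)
    (p := -1) (by norm_num)).2 (integrable_betaPDFReal hα).integrableOn
  have h2 : IntegrableOn (alphaHatPDF α) (Ioi 0) :=
    h1.congr_fun (fun x hx => pdf_eq_betaPDFReal α hx) measurableSet_Ioi
  refine (integrableOn_iff_integrable_of_support_subset ?_).1 h2
  intro x hx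
  by_contra h
  exact hx (pdf_of_le_one α (by simp only [mem_Ioi, not_lt] at h; linarith))

lemma integral_pdf {α : ℝ} (hα : 0 < α) : ∫ x, alphaHatPDF α x = 1 := by
  have h1 := integral_comp_rpow_Ioi (ProbabilityTheory.betaPDFReal (1 / 2) α)
    (p := -1) (by norm_num)
  rw [setIntegral_congr_fun measurableSet_Ioi (fun x hx => pdf_eq_betaPDFReal α hx),
    setIntegral_eq_integral_of_forall_compl_eq_zero,
    setIntegral_eq_integral_of_forall_compl_eq_zero, integral_betaPDFReal hα] at h1
  · exact h1
  · intro x hx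
    rw [ProbabilityTheory.betaPDFReal, if_neg (fun h => hx h.1)]
  · intro x hx
    exact pdf_of_le_one α (by simp only [mem_Ioi, not_lt] at hx; linarith)

/-! ### The distribution function and its quantiles -/

lemma cdf_sub {α : ℝ} (hα : 0 < α) (x y : ℝ) :
    alphaHatCDF α y - alphaHatCDF α x = ∫ t in x..y, alphaHatPDF α t :=
  intervalIntegral.integral_Iic_sub_Iic (integrable_pdf hα).integrableOn
    (integrable_pdf hα).integrableOn

lemma cdf_of_le_one (α : ℝ) {x : ℝ} (hx : x ≤ 1) : alphaHatCDF α x = 0 :=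
  setIntegral_eq_zero_of_forall_eq_zero fun _ ht => pdf_of_le_one α (le_trans ht hx)

lemma tendsto_cdf {α : ℝ} (hα : 0 < α) : Tendsto (alphaHatCDF α) atTop (𝓝 1) := by
  rw [← integral_pdf hα]
  exact (aecover_Iic tendsto_id).integral_tendsto_of_countably_generated (integrable_pdf hα)

lemma continuous_cdf {α : ℝ} (hα : 0 < α) : Continuous (alphaHatCDF α) := by
  have h := (integrable_pdf hα).continuous_primitive 1
  refine h.congr fun x => ?_
  rw [← cdf_sub hα, cdf_of_le_one α le_rfl, sub_zero]

lemma cdf_strictMonoOn {α : ℝ} (hα : 0 < α) : StrictMonoOn (alphaHatCDF α) (Ici 1) := by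
  intro x hx y _ hxy
  rw [← sub_pos, cdf_sub hα]
  exact intervalIntegral.intervalIntegral_pos_of_pos_on (integrable_pdf hα).intervalIntegrable
    (fun t ht => pdf_pos hα (lt_of_le_of_lt hx ht.1)) hxy

lemma cdf_pos {α : ℝ} (hα : 0 < α) {x : ℝ} (hx : 1 < x) : 0 < alphaHatCDF α x := by
  rw [← cdf_of_le_one α le_rfl]
  exact cdf_strictMonoOn hα self_mem_Ici hx.le hx

lemma cdf_lt_one {α : ℝ} (hα : 0 < α) {x : ℝ} (hx : 1 < x) : alphaHatCDF α x < 1 := by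
  have h1 : alphaHatCDF α x < alphaHatCDF α (x + 1) :=
    cdf_strictMonoOn hα hx.le (by simp only [mem_Ici]; linarith) (by linarith)
  refine lt_of_lt_of_le h1 (ge_of_tendsto (tendsto_cdf hα) ?_)
  filter_upwards [eventually_ge_atTop (x + 1)] with y hy
  exact (cdf_strictMonoOn hα).monotoneOn (by simp only [mem_Ici]; linarith)
    (by simp only [mem_Ici]; linarith) hy

lemma quantile_cdf {α : ℝ} (hα : 0 < α) {z : ℝ} (hz : 1 < z) :
    alphaHatQuantile α (alphaHatCDF α z) = z := by
  refine IsLeast.csInf_eq ⟨le_refl (alphaHatCDF α z), fun w hw => ?_⟩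
  by_contra! h
  have hw : alphaHatCDF α z ≤ alphaHatCDF α w := hw
  rcases le_or_gt w 1 with h1 | h1
  · rw [cdf_of_le_one α h1] at hw
    exact absurd (cdf_pos hα hz) (not_lt.2 hw)
  · exact absurd (cdf_strictMonoOn hα h1.le hz.le h) (not_lt.2 hw)

lemma exists_cdf_eq {α : ℝ} (hα : 0 < α) {u : ℝ} (h0 : 0 < u) (h1 : u < 1) :
    ∃ z, 1 < z ∧ alphaHatCDF α z = u := by
  obtain ⟨b, hb, hb1⟩ := (((tendsto_cdf hα).eventually (lt_mem_nhds h1)).and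
    (eventually_ge_atTop 1)).exists
  obtain ⟨z, hz, hzu⟩ := intermediate_value_Icc hb1 (continuous_cdf hα).continuousOn
    ⟨by rw [cdf_of_le_one α le_rfl]; exact h0.le, hb.le⟩
  refine ⟨z, lt_of_le_of_ne hz.1 ?_, hzu⟩
  rintro rfl
  rw [cdf_of_le_one α le_rfl] at hzu
  exact h0.ne hzu

/-! ### Unimodality of the log-ratio of the densities -/

/-- The logarithm of `f^{a}(t) / (c f^{b}(ct))`, up to an additive constant, in the variables
`s = 1/t` and `k = 1/c`. -/
noncomputable def logRatio (a b k s : ℝ) : ℝ :=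
  (a - 1) * Real.log (1 - s) - (b - 1) * Real.log (1 - k * s)

/-- The derivative of `logRatio` is a positive factor times an affine function of `s`. -/
lemma hasDerivAt_logRatio (a b : ℝ) {k s : ℝ} (h1 : 0 < 1 - s) (h2 : 0 < 1 - k * s) :
    HasDerivAt (logRatio a b k)
      (((1 - a) + k * (b - 1) - s * k * (b - a)) / ((1 - s) * (1 - k * s))) s := by
  have d1 : HasDerivAt (fun s : ℝ => 1 - s) (-1) s := by
    simpa using (hasDerivAt_id s).const_sub 1
  have d2 : HasDerivAt (fun s : ℝ => 1 - k * s) (-k) s := by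
    simpa using ((hasDerivAt_id s).const_mul k).const_sub 1
  have := ((d1.log h1.ne').const_mul (a - 1)).sub ((d2.log h2.ne').const_mul (b - 1))
  refine this.congr_deriv ?_
  have h1' := h1.ne'
  have h2' := h2.ne'
  rw [eq_div_iff (mul_ne_zero h1' h2')]
  have e1 : -1 / (1 - s) * (1 - s) = -1 := div_mul_cancel₀ _ h1'
  have e2 : -k / (1 - k * s) * (1 - k * s) = -k := div_mul_cancel₀ _ h2'
  linear_combination (a - 1) * (1 - k * s) * e1 - (b - 1) * (1 - s) * e2

lemma one_sub_mul_pos {k s : ℝ} (hk0 : 0 < k) (hk1 : k ≤ 1) (hs1 : s < 1) :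
    0 < 1 - k * s := by nlinarith

lemma logRatio_le_of_left {a b k s₁ s₂ : ℝ} (hab : a < b) (hk0 : 0 < k) (hk1 : k ≤ 1)
    (h12 : s₁ ≤ s₂) (hs2 : s₂ < 1) (hd : 0 ≤ (1 - a) + k * (b - 1) - s₂ * k * (b - a)) :
    logRatio a b k s₁ ≤ logRatio a b k s₂ := by
  have hder : ∀ s ∈ Icc s₁ s₂, HasDerivAt (logRatio a b k)
      (((1 - a) + k * (b - 1) - s * k * (b - a)) / ((1 - s) * (1 - k * s))) s := fun s hs =>
    hasDerivAt_logRatio a b (by linarith [hs.2])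
      (one_sub_mul_pos hk0 hk1 (by linarith [hs.2]))
  refine monotoneOn_of_deriv_nonneg (convex_Icc s₁ s₂)
    (fun s hs => (hder s hs).continuousAt.continuousWithinAt)
    (fun s hs => (hder s (interior_subset hs)).differentiableAt.differentiableWithinAt)
    (fun s hs => ?_) (left_mem_Icc.2 h12) (right_mem_Icc.2 h12) h12
  have hs := interior_subset hs
  rw [(hder s hs).deriv]
  refine div_nonneg ?_ (mul_pos (by linarith [hs.2])
    (one_sub_mul_pos hk0 hk1 (by linarith [hs.2]))).le
  nlinarith [mul_nonneg (sub_nonneg.2 hs.2) (mul_pos hk0 (sub_pos.2 hab)).le]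

lemma logRatio_le_of_right {a b k s₂ s₃ : ℝ} (hab : a < b) (hk0 : 0 < k) (hk1 : k ≤ 1)
    (h23 : s₂ ≤ s₃) (hs3 : s₃ < 1) (hd : (1 - a) + k * (b - 1) - s₂ * k * (b - a) ≤ 0) :
    logRatio a b k s₃ ≤ logRatio a b k s₂ := by
  have hder : ∀ s ∈ Icc s₂ s₃, HasDerivAt (logRatio a b k)
      (((1 - a) + k * (b - 1) - s * k * (b - a)) / ((1 - s) * (1 - k * s))) s := fun s hs =>
    hasDerivAt_logRatio a b (by linarith [hs.2])
      (one_sub_mul_pos hk0 hk1 (by linarith [hs.2]))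
  refine antitoneOn_of_deriv_nonpos (convex_Icc s₂ s₃)
    (fun s hs => (hder s hs).continuousAt.continuousWithinAt)
    (fun s hs => (hder s (interior_subset hs)).differentiableAt.differentiableWithinAt)
    (fun s hs => ?_) (left_mem_Icc.2 h23) (right_mem_Icc.2 h23) h23
  have hs := interior_subset hs
  rw [(hder s hs).deriv]
  refine div_nonpos_of_nonpos_of_nonneg ?_ (mul_pos (by linarith [hs.2])
    (one_sub_mul_pos hk0 hk1 (by linarith [hs.2]))).le
  nlinarith [mul_nonneg (sub_nonneg.2 hs.1) (mul_pos hk0 (sub_pos.2 hab)).le]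

lemma logRatio_unimodal {a b k s₁ s₂ s₃ : ℝ} (hab : a < b) (hk0 : 0 < k)
    (hk1 : k ≤ 1) (h12 : s₁ ≤ s₂) (h23 : s₂ ≤ s₃) (hs3 : s₃ < 1) :
    logRatio a b k s₁ ≤ logRatio a b k s₂ ∨ logRatio a b k s₃ ≤ logRatio a b k s₂ := by
  rcases le_total 0 ((1 - a) + k * (b - 1) - s₂ * k * (b - a)) with hd | hd
  · exact Or.inl (logRatio_le_of_left hab hk0 hk1 h12 (by linarith) hd)
  · exact Or.inr (logRatio_le_of_right hab hk0 hk1 h23 hs3 hd)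

lemma log_pdf {α : ℝ} (hα : 0 < α) {t : ℝ} (ht : 1 < t) :
    Real.log (alphaHatPDF α t) = Real.log (normConst α) + (-(3 / 2)) * Real.log t
      + (α - 1) * Real.log (1 - 1 / t) := by
  have ht0 : 0 < t := by linarith
  have h1 : 1 / t < 1 := by rw [div_lt_one ht0]; exact ht
  have h2 : 0 < 1 - 1 / t := by linarith
  rw [pdf_of_one_lt α ht, Real.log_mul (mul_pos (normConst_pos hα)
      (Real.rpow_pos_of_pos ht0 _)).ne' (Real.rpow_pos_of_pos h2 _).ne',
    Real.log_mul (normConst_pos hα).ne' (Real.rpow_pos_of_pos ht0 _).ne',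
    Real.log_rpow ht0, Real.log_rpow h2]

/-- The additive constant relating `logRatio` to the true log-ratio of the densities. -/
noncomputable def threshold (a b c : ℝ) : ℝ :=
  Real.log (normConst b) - 1 / 2 * Real.log c - Real.log (normConst a)

lemma log_pdf_sub {a b c t : ℝ} (ha : 0 < a) (hb : 0 < b) (hc : 1 ≤ c) (ht : 1 < t) :
    Real.log (alphaHatPDF a t) - Real.log (c * alphaHatPDF b (c * t))
      = logRatio a b (1 / c) (1 / t) - threshold a b c := by
  have hct : 1 < c * t := by nlinarith
  have hc0 : 0 < c := by linarith
  rw [Real.log_mul hc0.ne' (pdf_pos hb hct).ne', log_pdf ha ht, log_pdf hb hct,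
    Real.log_mul hc0.ne' (by linarith), logRatio, threshold,
    show 1 / c * (1 / t) = 1 / (c * t) by rw [one_div_mul_one_div]]
  ring

lemma logRatio_lt_threshold {a b c t : ℝ} (ha : 0 < a) (hb : 0 < b) (hc : 1 ≤ c) (ht : 1 < t)
    (h : alphaHatPDF a t < c * alphaHatPDF b (c * t)) :
    logRatio a b (1 / c) (1 / t) < threshold a b c := by
  have := Real.log_lt_log (pdf_pos ha ht) h
  linarith [log_pdf_sub ha hb hc ht]

lemma threshold_lt_logRatio {a b c t : ℝ} (ha : 0 < a) (hb : 0 < b) (hc : 1 ≤ c) (ht : 1 < t)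
    (h : c * alphaHatPDF b (c * t) < alphaHatPDF a t) :
    threshold a b c < logRatio a b (1 / c) (1 / t) := by
  have hct : 1 < c * t := by nlinarith
  have := Real.log_lt_log (mul_pos (by linarith) (pdf_pos hb hct)) h
  linarith [log_pdf_sub ha hb hc ht]

/-! ### Sign changes of the difference of distribution functions -/

lemma cdf_scaled_sub {b : ℝ} (hb : 0 < b) (c x y : ℝ) :
    alphaHatCDF b (c * y) - alphaHatCDF b (c * x) = ∫ t in x..y, c * alphaHatPDF b (c * t) := by
  rw [cdf_sub hb, intervalIntegral.integral_const_mul, intervalIntegral.mul_integral_comp_mul_left]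

lemma scaled_intervalIntegrable {b c : ℝ} (hb : 0 < b) (hc : 0 < c) (x y : ℝ) :
    IntervalIntegrable (fun t => c * alphaHatPDF b (c * t)) volume x y :=
  (((integrable_pdf hb).comp_mul_left' hc.ne').const_mul c).intervalIntegrable

/-- If `F(t) - G(ct)` strictly decreases over `[x, y]`, its density is negative somewhere. -/
lemma exists_pdf_lt {a b c x y : ℝ} (ha : 0 < a) (hb : 0 < b) (hc : 0 < c) (hxy : x ≤ y)
    (h : alphaHatCDF a y - alphaHatCDF b (c * y) < alphaHatCDF a x - alphaHatCDF b (c * x)) :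
    ∃ t ∈ Ioo x y, alphaHatPDF a t < c * alphaHatPDF b (c * t) := by
  by_contra! H
  have := intervalIntegral.integral_mono_on_of_le_Ioo hxy (scaled_intervalIntegrable hb hc x y)
    (integrable_pdf ha).intervalIntegrable H
  rw [← cdf_sub ha, ← cdf_scaled_sub hb] at this
  linarith

/-- If `F(t) - G(ct)` strictly increases over `[x, y]`, its density is positive somewhere. -/
lemma exists_lt_pdf {a b c x y : ℝ} (ha : 0 < a) (hb : 0 < b) (hc : 0 < c) (hxy : x ≤ y)
    (h : alphaHatCDF a x - alphaHatCDF b (c * x) < alphaHatCDF a y - alphaHatCDF b (c * y)) :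
    ∃ t ∈ Ioo x y, c * alphaHatPDF b (c * t) < alphaHatPDF a t := by
  by_contra! H
  have := intervalIntegral.integral_mono_on_of_le_Ioo hxy
    (integrable_pdf ha).intervalIntegrable (scaled_intervalIntegrable hb hc x y) H
  rw [← cdf_sub ha, ← cdf_scaled_sub hb] at this
  linarith

/-- Since `F(t) - G(ct)` tends to `0` at infinity, it has to increase beyond any point where it is
negative. -/
lemma exists_lt_pdf_right {a b c y : ℝ} (ha : 0 < a) (hb : 0 < b) (hc : 0 < c)
    (h : alphaHatCDF a y - alphaHatCDF b (c * y) < 0) :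
    ∃ t, y < t ∧ c * alphaHatPDF b (c * t) < alphaHatPDF a t := by
  have hlim : Tendsto (fun z => alphaHatCDF a z - alphaHatCDF b (c * z)) atTop (𝓝 0) := by
    have := (tendsto_cdf ha).sub ((tendsto_cdf hb).comp (tendsto_id.const_mul_atTop hc))
    simpa using this
  obtain ⟨z, hz, hyz⟩ := ((hlim.eventually (lt_mem_nhds h)).and (eventually_ge_atTop y)).exists
  obtain ⟨t, ht, hlt⟩ := exists_lt_pdf ha hb hc hyz hz
  exact ⟨t, ht.1, hlt⟩

/-- `α̂` is stochastically increasing in the shape parameter. -/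
lemma cdf_le_cdf {a b : ℝ} (ha : 0 < a) (hab : a < b) {x : ℝ} (hx : 1 < x) :
    alphaHatCDF b x ≤ alphaHatCDF a x := by
  have hb : 0 < b := ha.trans hab
  by_contra! h
  obtain ⟨p, hp, hp'⟩ := exists_pdf_lt (c := 1) ha hb one_pos hx.le (by
    rw [one_mul, one_mul, cdf_of_le_one a le_rfl, cdf_of_le_one b le_rfl]; linarith)
  obtain ⟨q, hq, hq'⟩ := exists_lt_pdf_right (c := 1) (y := x) ha hb one_pos
    (by rw [one_mul]; linarith)
  have h1 := logRatio_lt_threshold ha hb le_rfl hp.1 hp'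
  have h2 := threshold_lt_logRatio ha hb le_rfl (hx.trans hq) hq'
  have hp0 : 0 < p := by linarith [hp.1]
  have hp1 : 1 / p < 1 := by rw [div_lt_one hp0]; exact hp.1
  have h3 : logRatio a b (1 / 1) (1 / q) ≤ logRatio a b (1 / 1) (1 / p) := by
    refine logRatio_le_of_left hab (by norm_num) (by norm_num)
      (one_div_le_one_div_of_le hp0 (hp.2.trans hq).le) hp1 ?_
    nlinarith
  linarith

lemma cdf_crossing {a b c x y : ℝ} (ha : 0 < a) (hab : a < b) (hc : 1 ≤ c) (hx : 1 < x)
    (hxy : x ≤ y) (h : alphaHatCDF b (c * x) ≤ alphaHatCDF a x) :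
    alphaHatCDF b (c * y) ≤ alphaHatCDF a y := by
  have hb : 0 < b := ha.trans hab
  have hc0 : 0 < c := by linarith
  rcases hc.eq_or_lt with rfl | hc1
  · rw [one_mul]
    exact cdf_le_cdf ha hab (by linarith)
  by_contra! hy
  obtain ⟨r, hr, hr'⟩ := exists_lt_pdf ha hb hc0 hx.le (by
    have := cdf_pos hb hc1
    rw [mul_one, cdf_of_le_one a le_rfl]; linarith)
  obtain ⟨p, hp, hp'⟩ := exists_pdf_lt (c := c) ha hb hc0 hxy (by linarith)
  obtain ⟨q, hq, hq'⟩ := exists_lt_pdf_right (c := c) (y := y) ha hb hc0 (by linarith)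
  have hp1 : 1 < p := hx.trans hp.1
  have h1 := threshold_lt_logRatio ha hb hc hr.1 hr'
  have h2 := logRatio_lt_threshold ha hb hc hp1 hp'
  have h3 := threshold_lt_logRatio ha hb hc (hp1.trans (hp.2.trans hq)) hq'
  have hr0 : 0 < r := by linarith [hr.1]
  have hr1 : 1 / r < 1 := by rw [div_lt_one hr0]; exact hr.1
  rcases logRatio_unimodal hab (one_div_pos.2 hc0) ((div_le_one hc0).2 hc)
    (one_div_le_one_div_of_le (by linarith) (hp.2.trans hq).le)
    (one_div_le_one_div_of_le hr0 (hr.2.trans hp.1).le) hr1 with h4 | h4 <;> linarith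

end AlphaHat

open AlphaHat

/-- For `n = 2`, the moment estimator `α̂` is increasing in the shape
parameter `α` with respect to the star order: for `0 < α₁ < α₂`, `α̂₁ ≤_* α̂₂`, that is,
the function `x ↦ G⁻¹(F(x))/x` is increasing on the support `(1, ∞)` of `α̂₁`. -/
theorem momentEstimator_star_increasing_two
    (α₁ α₂ : ℝ) (hα₁ : 0 < α₁) (hα : α₁ < α₂) :
    MonotoneOn (fun x => alphaHatQuantile α₂ (alphaHatCDF α₁ x) / x)
      (Set.Ioi (1 : ℝ)) := by
  intro x hx y hy hxy
  have hx : 1 < x := hx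
  have hy : 1 < y := hy
  have hα₂ : 0 < α₂ := hα₁.trans hα
  obtain ⟨z, hz, hzx⟩ := exists_cdf_eq hα₂ (cdf_pos hα₁ hx) (cdf_lt_one hα₁ hx)
  obtain ⟨w, hw, hwy⟩ := exists_cdf_eq hα₂ (cdf_pos hα₁ hy) (cdf_lt_one hα₁ hy)
  simp only
  rw [← hzx, ← hwy, quantile_cdf hα₂ hz, quantile_cdf hα₂ hw]
  have hx0 : 0 < x := by linarith
  have hy0 : 0 < y := by linarith
  have hxz : x ≤ z := (cdf_strictMonoOn hα₂).le_iff_le hx.le hz.le |>.1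
    (hzx ▸ cdf_le_cdf hα₁ hα hx)
  have hc : 1 ≤ z / x := (one_le_div hx0).2 hxz
  have key := cdf_crossing hα₁ hα hc hx hxy (by rw [div_mul_cancel₀ z hx0.ne', hzx])
  rw [← hwy] at key
  rw [le_div_iff₀ hy0]
  exact (cdf_strictMonoOn hα₂).le_iff_le (by simp only [mem_Ici]; nlinarith) hw.le |>.1 key
end
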